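/- arXiv:alg-geom/9601012 — 7 statements merged into one kernel-verified Lean document; each statement's English description precedes it below -/
import Mathlib

section
/- Let U ⊆ ℂ be open, let f = f₀ + θf₁ be a superfunction on the (1|1)-dimensional superdomain over U (f₀, f₁ : U → Λ holomorphic), let ẑ ∈ Λ₀ with ẑ^red ∈ U, and let ρ ∈ Λ₁. Then the following are equivalent: (i) f is divisible by the irreducible divisor z − ẑ − θρ, i.e. there exist holomorphic functions g₀, g₁ : U → Λ such that f₀(z) = (z − ẑ)·g₀(z) and f₁(z) = (z − ẑ)·g₁(z) − ρ·g₀(z) for all z ∈ U; (ii) f(ẑ,ρ) = 0 and (Df)(ẑ,ρ) = 0, i.e. f₀(ẑ) + ρ·f₁(ẑ) = 0 and f₁(ẑ) + ρ·f₀′(ẑ) = 0, where D = ∂_θ + θ∂_z. -/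
noncomputable section

open ExteriorAlgebra

/-- `Λ n`: the exterior algebra of `ℂⁿ` (with its `n` odd generators `βᵢ`). -/
abbrev SuperAlg (n : ℕ) : Type := ExteriorAlgebra ℂ (Fin n → ℂ)

/-- The even part `Λ₀` of the exterior algebra, i.e. the degree-`0̄` part of its `ℤ₂`-grading. -/
def evenPart (n : ℕ) : Submodule ℂ (SuperAlg n) :=
  CliffordAlgebra.evenOdd (0 : QuadraticForm ℂ (Fin n → ℂ)) 0

/-- The odd part `Λ₁` of the exterior algebra, i.e. the degree-`1̄` part of its `ℤ₂`-grading. -/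
def oddPart (n : ℕ) : Submodule ℂ (SuperAlg n) :=
  CliffordAlgebra.evenOdd (0 : QuadraticForm ℂ (Fin n → ℂ)) 1

set_option synthInstance.maxHeartbeats 1000000 in
theorem superAlg_noZeroSMulDivisors (n : ℕ) : NoZeroSMulDivisors ℂ (SuperAlg n) :=
  inferInstance

theorem superAlg_exteriorPower_eq_bot (n i : ℕ) (hi : n < i) :
    (⋀[ℂ]^i (Fin n → ℂ) : Submodule ℂ (SuperAlg n)) = ⊥ := by
  rw [← ExteriorAlgebra.ιMulti_span_fixedDegree]
  refine le_bot_iff.mp (Submodule.span_le.mpr ?_)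
  rintro x ⟨v, rfl⟩
  have hv : ¬ LinearIndependent ℂ v := by
    intro h
    have hc := h.fintype_card_le_finrank
    simp only [Fintype.card_fin, Module.finrank_fin_fun] at hc
    omega
  haveI := superAlg_noZeroSMulDivisors n
  simpa using AlternatingMap.map_linearDependent (ιMulti ℂ i) v hv

/-- `Λ` is a finite-dimensional complex vector space (of dimension `2ⁿ`). -/
instance superAlg_moduleFinite (n : ℕ) : Module.Finite ℂ (SuperAlg n) := by
  classical
  rw [Module.finite_def]
  have hfg : ∀ i : ℕ, (⋀[ℂ]^i (Fin n → ℂ) : Submodule ℂ (SuperAlg n)).FG := by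
    intro i
    refine Submodule.FG.pow ?_ i
    rw [LinearMap.range_eq_map]
    exact Submodule.FG.map _ (Module.finite_def.mp inferInstance)
  have hint : DirectSum.IsInternal
      (fun i : ℕ => (⋀[ℂ]^i (Fin n → ℂ) : Submodule ℂ (SuperAlg n))) :=
    DirectSum.Decomposition.isInternal _
  have htop := hint.submodule_iSup_eq_top
  have hsup : (⊤ : Submodule ℂ (SuperAlg n))
      = ⨆ i ∈ Finset.range (n + 1), (⋀[ℂ]^i (Fin n → ℂ) : Submodule ℂ (SuperAlg n)) := by
    refine le_antisymm ?_ le_top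
    rw [← htop]
    refine iSup_le fun i => ?_
    rcases le_or_gt i n with hi | hi
    · exact le_biSup _ (Finset.mem_range.mpr (by omega))
    · rw [superAlg_exteriorPower_eq_bot n i hi]
      exact bot_le
  rw [hsup]
  exact Submodule.fg_biSup _ _ fun i _ => hfg i

/-- A norm on the finite-dimensional complex vector space `Λ`, transported from `ℂ^{2ⁿ}` by a
choice of basis.  (All norms on a finite-dimensional complex vector space are equivalent, so
the notions of holomorphy and derivative below do not depend on this choice; holomorphy is
equivalent to componentwise complex analyticity with respect to any basis.) -/
instance superAlg_normedAddCommGroup (n : ℕ) : NormedAddCommGroup (SuperAlg n) :=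
  NormedAddCommGroup.induced (SuperAlg n)
    (Fin (Module.finrank ℂ (SuperAlg n)) → ℂ)
    (Module.finBasis ℂ (SuperAlg n)).equivFun
    (Module.finBasis ℂ (SuperAlg n)).equivFun.injective

instance superAlg_normedSpace (n : ℕ) : NormedSpace ℂ (SuperAlg n) :=
  NormedSpace.induced ℂ (SuperAlg n) (Fin (Module.finrank ℂ (SuperAlg n)) → ℂ)
    (Module.finBasis ℂ (SuperAlg n)).equivFun

/-- The reduction `λ ↦ λ^red`: the image of `λ ∈ Λ` under the augmentation `Λ → ℂ`
(quotienting out nilpotents). -/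
def reduce (n : ℕ) (a : SuperAlg n) : ℂ :=
  ExteriorAlgebra.algebraMapInv (R := ℂ) (M := Fin n → ℂ) a

/-- The value `h(ẑ) = Σ_{m≥0} (1/m!)·h^{(m)}(ẑ^red)·(ẑ − ẑ^red)^m` of a holomorphic function
`h` at an even element `ẑ ∈ Λ₀` with `ẑ^red ∈ U`.  Since `ẑ − ẑ^red` lies in the nilpotent
ideal `𝔪` and `𝔪^{n+1} = 0`, all terms with `m > n` vanish, so the sum may be truncated at
`m = n`. -/
def evalNilp (n : ℕ) (h : ℂ → SuperAlg n) (w : SuperAlg n) : SuperAlg n :=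
  ∑ m ∈ Finset.range (n + 1),
    ((m.factorial : ℂ))⁻¹ •
      (iteratedDeriv m h (reduce n w) * (w - algebraMap ℂ (SuperAlg n) (reduce n w)) ^ m)

section AbstractDiv

variable {V : Type*} [NormedAddCommGroup V] [NormedSpace ℂ V]

theorem aux_diffOn [CompleteSpace V] {U : Set ℂ} (hU : IsOpen U) {h : ℂ → V}
    (hh : DifferentiableOn ℂ h U) (k : ℕ) : DifferentiableOn ℂ (iteratedDeriv k h) U := by
  induction k with
  | zero => simpa using hh
  | succ k ih => rw [iteratedDeriv_succ]; exact ih.deriv hU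

theorem aux_deriv_eqOn {U : Set ℂ} (hU : IsOpen U) {f g : ℂ → V} (h : Set.EqOn f g U) :
    Set.EqOn (deriv f) (deriv g) U := fun _ hz =>
  (Filter.eventuallyEq_of_mem (hU.mem_nhds hz) h).deriv_eq

theorem aux_eqOn {U : Set ℂ} (hU : IsOpen U) {f g : ℂ → V} (h : Set.EqOn f g U) (k : ℕ) :
    Set.EqOn (iteratedDeriv k f) (iteratedDeriv k g) U := by
  induction k with
  | zero => simpa using h
  | succ k ih => rw [iteratedDeriv_succ, iteratedDeriv_succ]; exact aux_deriv_eqOn hU ih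

theorem aux_add [CompleteSpace V] {U : Set ℂ} (hU : IsOpen U) {f g : ℂ → V}
    (hf : DifferentiableOn ℂ f U) (hg : DifferentiableOn ℂ g U) (k : ℕ) :
    Set.EqOn (iteratedDeriv k (fun z => f z + g z))
      (fun z => iteratedDeriv k f z + iteratedDeriv k g z) U := by
  induction k with
  | zero => intro z _; simp
  | succ k ih =>
    intro z hz
    rw [iteratedDeriv_succ, aux_deriv_eqOn hU ih hz, iteratedDeriv_succ, iteratedDeriv_succ]
    exact deriv_fun_add ((aux_diffOn hU hf k).differentiableAt (hU.mem_nhds hz))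
      ((aux_diffOn hU hg k).differentiableAt (hU.mem_nhds hz))

theorem aux_clm [CompleteSpace V] {U : Set ℂ} (hU : IsOpen U) {f : ℂ → V} (N : V →L[ℂ] V)
    (hf : DifferentiableOn ℂ f U) (k : ℕ) :
    Set.EqOn (iteratedDeriv k (fun z => N (f z))) (fun z => N (iteratedDeriv k f z)) U := by
  induction k with
  | zero => intro z _; simp
  | succ k ih =>
    intro z hz
    rw [iteratedDeriv_succ, aux_deriv_eqOn hU ih hz, iteratedDeriv_succ]
    exact (N.hasFDerivAt.comp_hasDerivAt z
      ((aux_diffOn hU hf k).differentiableAt (hU.mem_nhds hz)).hasDerivAt).deriv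

theorem aux_leib [CompleteSpace V] {U : Set ℂ} (hU : IsOpen U) {g : ℂ → V} (a : ℂ)
    (hg : DifferentiableOn ℂ g U) (k : ℕ) :
    Set.EqOn (iteratedDeriv k (fun z => (z - a) • g z))
      (fun z => (z - a) • iteratedDeriv k g z + (k : ℂ) • iteratedDeriv (k - 1) g z) U := by
  induction k with
  | zero => intro z _; simp
  | succ k ih =>
    intro z hz
    have hd : ∀ j, HasDerivAt (iteratedDeriv j g) (iteratedDeriv (j + 1) g z) z := fun j => by
      rw [iteratedDeriv_succ]
      exact ((aux_diffOn hU hg j).differentiableAt (hU.mem_nhds hz)).hasDerivAt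
    rw [iteratedDeriv_succ, aux_deriv_eqOn hU ih hz]
    have h1 : HasDerivAt (fun z : ℂ => z - a) 1 z := (hasDerivAt_id z).sub_const a
    have := ((h1.smul (hd k)).add ((hd (k - 1)).const_smul (k : ℂ))).deriv
    refine this.trans ?_
    cases k with
    | zero => simp
    | succ k =>
      simp only [Nat.add_sub_cancel]
      push_cast
      module

/-- Abstract evaluation at a nilpotent thickening. -/
def aE (n : ℕ) (N : V →L[ℂ] V) (a : ℂ) (h : ℂ → V) : V :=
  ∑ m ∈ Finset.range (n + 1), ((m.factorial : ℂ))⁻¹ • (N ^ m) (iteratedDeriv m h a)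

variable [CompleteSpace V] {U : Set ℂ} (hU : IsOpen U) {a : ℂ} (ha : a ∈ U) (n : ℕ)
  (N : V →L[ℂ] V)

theorem aE_congr (hU : IsOpen U) (ha : a ∈ U) {f g : ℂ → V} (h : Set.EqOn f g U) :
    aE n N a f = aE n N a g := by
  unfold aE
  exact Finset.sum_congr rfl fun m _ => by rw [aux_eqOn hU h m ha]

theorem aE_add (hU : IsOpen U) (ha : a ∈ U) {f g : ℂ → V}
    (hf : DifferentiableOn ℂ f U) (hg : DifferentiableOn ℂ g U) :
    aE n N a (fun z => f z + g z) = aE n N a f + aE n N a g := by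
  unfold aE
  rw [← Finset.sum_add_distrib]
  exact Finset.sum_congr rfl fun m _ => by rw [aux_add hU hf hg m ha]; simp

theorem aE_clm (hU : IsOpen U) (ha : a ∈ U) {f : ℂ → V} (R : V →L[ℂ] V) (hR : Commute R N)
    (hf : DifferentiableOn ℂ f U) :
    aE n N a (fun z => R (f z)) = R (aE n N a f) := by
  unfold aE
  rw [map_sum]
  refine Finset.sum_congr rfl fun m _ => ?_
  rw [aux_clm hU R hf m ha, map_smul]
  have := DFunLike.congr_fun (hR.pow_right m).eq (iteratedDeriv m f a)
  simp only [ContinuousLinearMap.mul_apply] at this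
  rw [this]

theorem aE_const (c : V) : aE n N a (fun _ => c) = c := by
  unfold aE
  rw [Finset.sum_range_succ', Finset.sum_eq_zero]
  · simp
  · intro m _
    simp [iteratedDeriv_const]

theorem aE_mul (hU : IsOpen U) (ha : a ∈ U) (hN : N ^ (n + 1) = 0) {g : ℂ → V}
    (hg : DifferentiableOn ℂ g U) :
    aE n N a (fun z => (z - a) • g z + (- N) (g z)) = 0 := by
  have hd : DifferentiableOn ℂ (fun z => (z - a) • g z) U :=
    (differentiableOn_id.sub_const a).smul hg
  have hd2 : DifferentiableOn ℂ (fun z => (-N) (g z)) U :=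
    (-N).differentiable.comp_differentiableOn hg
  rw [aE_add n N hU ha hd hd2, aE_clm n N hU ha (-N) (Commute.neg_left (Commute.refl N)) hg]
  have key : ∀ k, aE k N a (fun z => (z - a) • g z) + (-N) (aE k N a g)
      = - (((k.factorial : ℂ))⁻¹ • (N ^ (k + 1)) (iteratedDeriv k g a)) := by
    intro k
    induction k with
    | zero => simp [aE]
    | succ k ih =>
      have e : ∀ h : ℂ → V, aE (k + 1) N a h = aE k N a h +
        (((k + 1).factorial : ℂ))⁻¹ • (N ^ (k + 1)) (iteratedDeriv (k + 1) h a) := fun h =>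
        Finset.sum_range_succ _ _
      rw [e, e, map_add]
      rw [add_add_add_comm, ih, aux_leib hU a hg (k + 1) ha]
      have hk : ((k : ℂ) + 1) ≠ 0 := Nat.cast_add_one_ne_zero k
      have hk' : ((k.factorial : ℂ)) ≠ 0 := by exact_mod_cast k.factorial_ne_zero
      have e2 : (((k + 1).factorial : ℂ))⁻¹ * ((k : ℂ) + 1) = ((k.factorial : ℂ))⁻¹ := by
        rw [Nat.factorial_succ]; push_cast; field_simp
      simp only [sub_self, zero_smul, zero_add, map_smul, Nat.add_sub_cancel, smul_smul]
      have e3 : ∀ x, (N ^ (k + 1 + 1)) x = N ((N ^ (k + 1)) x) := fun x => by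
        rw [pow_succ' N (k + 1)]; rfl
      rw [Nat.cast_add, Nat.cast_one, e2, e3, ContinuousLinearMap.neg_apply]
      module
  rw [key n, hN]
  simp

theorem aE_deriv (hU : IsOpen U) (ha : a ∈ U) (hN : N ^ (n + 1) = 0) {f g : ℂ → V}
    (hg : DifferentiableOn ℂ g U) (hf : Set.EqOn f (fun z => (z - a) • g z + (- N) (g z)) U) :
    aE n N a (deriv f) = aE n N a g := by
  have hg' := hg.deriv hU
  have : Set.EqOn (deriv f)
      (fun z => g z + ((z - a) • deriv g z + (- N) (deriv g z))) U := by
    intro z hz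
    rw [aux_deriv_eqOn hU hf hz]
    have hgz := (hg.differentiableAt (hU.mem_nhds hz)).hasDerivAt
    have h1 : HasDerivAt (fun z : ℂ => z - a) 1 z := (hasDerivAt_id z).sub_const a
    refine ((h1.smul hgz).add ((-N).hasFDerivAt.comp_hasDerivAt z hgz)).deriv.trans ?_
    simp only [one_smul]
    abel
  have hd : DifferentiableOn ℂ (fun z => (z - a) • deriv g z + (- N) (deriv g z)) U :=
    ((differentiableOn_id.sub_const a).smul hg').add
      ((-N).differentiable.comp_differentiableOn hg')
  rw [aE_congr n N hU ha this, aE_add n N hU ha hg hd, aE_mul n N hU ha hN hg', add_zero]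

theorem aE_div (hU : IsOpen U) (ha : a ∈ U) (hN : N ^ (n + 1) = 0) {h : ℂ → V}
    (hh : DifferentiableOn ℂ h U) (h0 : aE n N a h = 0) :
    ∃ g : ℂ → V, DifferentiableOn ℂ g U ∧
      Set.EqOn h (fun z => (z - a) • g z + (- N) (g z)) U := by
  have key : ∀ k, ∃ (g r : ℂ → V) (c : V), DifferentiableOn ℂ g U ∧ DifferentiableOn ℂ r U ∧
      ∀ z ∈ U, h z = ((z - a) • g z + (- N) (g z)) + c + (N ^ k) (r z) := by
    intro k
    induction k with
    | zero => exact ⟨0, h, 0, differentiableOn_const 0, hh, by simp⟩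
    | succ k ih =>
      obtain ⟨g, r, c, hg, hr, e⟩ := ih
      have hq : DifferentiableOn ℂ (dslope r a) U :=
        (Complex.differentiableOn_dslope (hU.mem_nhds ha)).2 hr
      refine ⟨fun z => g z + (N ^ k) (dslope r a z), dslope r a, c + (N ^ k) (r a),
        hg.add ((N ^ k).differentiable.comp_differentiableOn hq), hq, fun z hz => ?_⟩
      have hs : r z = r a + (z - a) • dslope r a z := by rw [sub_smul_dslope]; abel
      rw [e z hz, hs, pow_succ']
      simp only [map_add, map_smul, smul_add, ContinuousLinearMap.mul_apply,
        ContinuousLinearMap.neg_apply]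
      abel
  obtain ⟨g, r, c, hg, hr, e⟩ := key (n + 1)
  have hd : DifferentiableOn ℂ (fun z => (z - a) • g z + (- N) (g z)) U :=
    ((differentiableOn_id.sub_const a).smul hg).add
      ((-N).differentiable.comp_differentiableOn hg)
  have e' : Set.EqOn h (fun z => ((z - a) • g z + (- N) (g z)) + c) U := fun z hz => by
    rw [e z hz, hN]; simp
  have hc : c = 0 := by
    rw [aE_congr n N hU ha e', aE_add n N hU ha hd (differentiableOn_const c),
      aE_mul n N hU ha hN hg, aE_const, zero_add] at h0
    exact h0
  refine ⟨g, hg, fun z hz => ?_⟩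
  rw [e' hz, hc]; simp

theorem aE_main (hU : IsOpen U) (ha : a ∈ U) (hN : N ^ (n + 1) = 0) (R : V →L[ℂ] V)
    (hRN : Commute R N) (hR : ∀ x, R (R x) = 0) {f₀ f₁ : ℂ → V}
    (hf₀ : DifferentiableOn ℂ f₀ U) (hf₁ : DifferentiableOn ℂ f₁ U) :
    (∃ g₀ g₁ : ℂ → V, DifferentiableOn ℂ g₀ U ∧ DifferentiableOn ℂ g₁ U ∧
      ∀ z ∈ U, f₀ z = (z - a) • g₀ z + (- N) (g₀ z) ∧
        f₁ z = ((z - a) • g₁ z + (- N) (g₁ z)) + (- R) (g₀ z)) ↔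
    (aE n N a f₀ + R (aE n N a f₁) = 0 ∧ aE n N a f₁ + R (aE n N a (deriv f₀)) = 0) := by
  constructor
  · rintro ⟨g₀, g₁, hg₀, hg₁, e⟩
    have e0 : Set.EqOn f₀ (fun z => (z - a) • g₀ z + (- N) (g₀ z)) U := fun z hz => (e z hz).1
    have e1 : Set.EqOn f₁ (fun z => ((z - a) • g₁ z + (- N) (g₁ z)) + (- R) (g₀ z)) U :=
      fun z hz => (e z hz).2
    have hd : DifferentiableOn ℂ (fun z => (z - a) • g₁ z + (- N) (g₁ z)) U :=
      ((differentiableOn_id.sub_const a).smul hg₁).add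
        ((-N).differentiable.comp_differentiableOn hg₁)
    have hd2 : DifferentiableOn ℂ (fun z => (-R) (g₀ z)) U :=
      (-R).differentiable.comp_differentiableOn hg₀
    have E1 : aE n N a f₁ = - R (aE n N a g₀) := by
      rw [aE_congr n N hU ha e1,
        aE_add n N hU ha hd hd2,
        aE_mul n N hU ha hN hg₁, aE_clm n N hU ha (-R) hRN.neg_left hg₀]
      simp
    rw [aE_deriv n N hU ha hN hg₀ e0, aE_congr n N hU ha e0, aE_mul n N hU ha hN hg₀, E1]
    simp [hR]
  · rintro ⟨h0, h1⟩
    have E1 := eq_neg_of_add_eq_zero_left h1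
    rw [E1, map_neg, hR, neg_zero, add_zero] at h0
    obtain ⟨g₀, hg₀, e0⟩ := aE_div n N hU ha hN hf₀ h0
    have hRg : DifferentiableOn ℂ (fun z => R (g₀ z)) U :=
      R.differentiable.comp_differentiableOn hg₀
    obtain ⟨g₁, hg₁, e1⟩ := aE_div n N hU ha hN (h := fun z => f₁ z + R (g₀ z))
      (hf₁.add hRg) (by
        rw [aE_add n N hU ha hf₁ hRg, aE_clm n N hU ha R hRN hg₀,
          ← aE_deriv n N hU ha hN hg₀ e0, h1])
    refine ⟨g₀, g₁, hg₀, hg₁, fun z hz => ⟨e0 hz, ?_⟩⟩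
    have := e1 hz
    simp only at this
    rw [← this]; simp

end AbstractDiv

section AlgFacts

theorem sa_swap (n : ℕ) (v w : Fin n → ℂ) :
    (ExteriorAlgebra.ι ℂ v : SuperAlg n) * ExteriorAlgebra.ι ℂ w
      = -(ExteriorAlgebra.ι ℂ w * ExteriorAlgebra.ι ℂ v) :=
  eq_neg_of_add_eq_zero_left (ExteriorAlgebra.ι_add_mul_swap v w)

theorem sa_pair (n : ℕ) (u v w : Fin n → ℂ) :
    (ExteriorAlgebra.ι ℂ u : SuperAlg n) * (ExteriorAlgebra.ι ℂ v * ExteriorAlgebra.ι ℂ w)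
      = (ExteriorAlgebra.ι ℂ v * ExteriorAlgebra.ι ℂ w) * ExteriorAlgebra.ι ℂ u := by
  rw [← mul_assoc, sa_swap n u v, neg_mul, mul_assoc, sa_swap n u w, mul_neg, neg_neg, mul_assoc]

theorem sa_central_of (n : ℕ) (x : SuperAlg n)
    (h : ∀ v, ExteriorAlgebra.ι ℂ v * x = x * ExteriorAlgebra.ι ℂ v) (y : SuperAlg n) :
    y * x = x * y := by
  induction y using ExteriorAlgebra.induction with
  | algebraMap r => exact Algebra.commutes r x
  | ι v => exact h v
  | mul a b ha hb => rw [mul_assoc, hb, ← mul_assoc, ha, mul_assoc]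
  | add a b ha hb => rw [add_mul, mul_add, ha, hb]

theorem sa_pair_central (n : ℕ) (v w : Fin n → ℂ) (y : SuperAlg n) :
    y * (ExteriorAlgebra.ι ℂ v * ExteriorAlgebra.ι ℂ w)
      = (ExteriorAlgebra.ι ℂ v * ExteriorAlgebra.ι ℂ w) * y :=
  sa_central_of n _ (fun u => sa_pair n u v w) y

theorem sa_even_central (n : ℕ) (x : SuperAlg n) (hx : x ∈ evenPart n) (y : SuperAlg n) :
    y * x = x * y := by
  unfold evenPart at hx
  induction x, hx using CliffordAlgebra.even_induction with
  | algebraMap r => exact (Algebra.commutes r y).symm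
  | add a b _ _ ha hb => rw [mul_add, add_mul, ha, hb]
  | ι_mul_ι_mul v w a _ ha =>
    have := sa_pair_central n v w y
    change y * ((ExteriorAlgebra.ι ℂ v * ExteriorAlgebra.ι ℂ w) * a)
      = ((ExteriorAlgebra.ι ℂ v * ExteriorAlgebra.ι ℂ w) * a) * y
    rw [← mul_assoc, this, mul_assoc _ y, ha, ← mul_assoc]

theorem sa_odd_ι (n : ℕ) (x : SuperAlg n) (hx : x ∈ oddPart n) (u : Fin n → ℂ) :
    ExteriorAlgebra.ι ℂ u * x = -(x * ExteriorAlgebra.ι ℂ u) := by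
  unfold oddPart at hx
  induction x, hx using CliffordAlgebra.odd_induction with
  | ι v => exact sa_swap n u v
  | add a b _ _ ha hb => rw [mul_add, add_mul, ha, hb, neg_add]
  | ι_mul_ι_mul v w a _ ha =>
    have := sa_pair_central n v w (ExteriorAlgebra.ι ℂ u)
    change ExteriorAlgebra.ι ℂ u * ((ExteriorAlgebra.ι ℂ v * ExteriorAlgebra.ι ℂ w) * a)
      = -(((ExteriorAlgebra.ι ℂ v * ExteriorAlgebra.ι ℂ w) * a) * ExteriorAlgebra.ι ℂ u)
    rw [← mul_assoc, this, mul_assoc _ (ExteriorAlgebra.ι ℂ u), ha, mul_neg, ← mul_assoc]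

theorem sa_odd_odd (n : ℕ) (x y : SuperAlg n) (hx : x ∈ oddPart n) (hy : y ∈ oddPart n) :
    y * x = -(x * y) := by
  unfold oddPart at hy
  induction y, hy using CliffordAlgebra.odd_induction with
  | ι v => exact sa_odd_ι n x hx v
  | add a b _ _ ha hb => rw [mul_add, add_mul, ha, hb, neg_add]
  | ι_mul_ι_mul v w a _ ha =>
    have := sa_pair_central n v w x
    change ((ExteriorAlgebra.ι ℂ v * ExteriorAlgebra.ι ℂ w) * a) * x
      = -(x * ((ExteriorAlgebra.ι ℂ v * ExteriorAlgebra.ι ℂ w) * a))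
    rw [← mul_assoc x, this, mul_assoc, ha, mul_neg, mul_assoc _ x]

theorem sa_odd_sq (n : ℕ) (x : SuperAlg n) (hx : x ∈ oddPart n) : x * x = 0 := by
  have h := sa_odd_odd n x x hx hx
  have h2 : (2 : ℂ) • (x * x) = 0 := by
    rw [two_smul]
    nth_rewrite 1 [h]
    exact neg_add_cancel _
  have h3 : (2 : ℂ)⁻¹ • ((2 : ℂ) • (x * x)) = 0 := by rw [h2, smul_zero]
  rwa [smul_smul, inv_mul_cancel₀ two_ne_zero, one_smul] at h3

theorem sa_sub_red (n : ℕ) (x : SuperAlg n) :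
    x - algebraMap ℂ (SuperAlg n) (reduce n x) ∈
      (LinearMap.range (ExteriorAlgebra.ι ℂ : (Fin n → ℂ) →ₗ[ℂ] SuperAlg n)) *
        (⊤ : Submodule ℂ (SuperAlg n)) := by
  unfold reduce
  induction x using ExteriorAlgebra.induction with
  | algebraMap r => simp
  | ι v =>
    have : ExteriorAlgebra.algebraMapInv (ExteriorAlgebra.ι ℂ v) = (0 : ℂ) := by
      simp [ExteriorAlgebra.algebraMapInv]
    rw [this, map_zero, sub_zero, ← mul_one (ExteriorAlgebra.ι ℂ v)]
    exact Submodule.mul_mem_mul ⟨v, rfl⟩ trivial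
  | add a b ha hb =>
    rw [map_add, map_add, add_sub_add_comm]
    exact add_mem ha hb
  | mul a b ha hb =>
    have e : a * b - algebraMap ℂ (SuperAlg n) (ExteriorAlgebra.algebraMapInv (a * b))
      = (a - algebraMap ℂ (SuperAlg n) (ExteriorAlgebra.algebraMapInv a)) * b
        + (ExteriorAlgebra.algebraMapInv a : ℂ) •
          (b - algebraMap ℂ (SuperAlg n) (ExteriorAlgebra.algebraMapInv b)) := by
      rw [Algebra.smul_def, map_mul, map_mul]
      noncomm_ring
    rw [e]
    refine add_mem ?_ (Submodule.smul_mem _ _ hb)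
    have := Submodule.mul_mem_mul ha (show b ∈ (⊤ : Submodule ℂ (SuperAlg n)) from trivial)
    rw [mul_assoc] at this
    exact SetLike.le_def.mp (mul_le_mul' le_rfl le_top) this

theorem sa_nilp (n : ℕ) (x : SuperAlg n) (hx : ∀ y, y * x = x * y)
    (h : x ∈ (LinearMap.range (ExteriorAlgebra.ι ℂ : (Fin n → ℂ) →ₗ[ℂ] SuperAlg n)) *
        (⊤ : Submodule ℂ (SuperAlg n))) : x ^ (n + 1) = 0 := by
  have key : ∀ k : ℕ, x ^ k ∈
      (LinearMap.range (ExteriorAlgebra.ι ℂ : (Fin n → ℂ) →ₗ[ℂ] SuperAlg n)) ^ k *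
        (⊤ : Submodule ℂ (SuperAlg n)) := by
    intro k
    induction k with
    | zero => simp
    | succ k ih =>
      have hc : ∀ y, y * x ^ k = x ^ k * y := fun y =>
        ((show Commute y x from hx y).pow_right k).eq
      have : ∀ w ∈ (LinearMap.range (ExteriorAlgebra.ι ℂ : (Fin n → ℂ) →ₗ[ℂ] SuperAlg n)) *
        (⊤ : Submodule ℂ (SuperAlg n)), w * x ^ k ∈
        (LinearMap.range (ExteriorAlgebra.ι ℂ : (Fin n → ℂ) →ₗ[ℂ] SuperAlg n)) ^ (k + 1) *
        (⊤ : Submodule ℂ (SuperAlg n)) := by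
        intro w hw
        induction hw using Submodule.mul_induction_on' with
        | mem_mul_mem l hl t ht =>
          rw [mul_assoc, hc, pow_succ', mul_assoc]
          refine Submodule.mul_mem_mul hl ?_
          have := Submodule.mul_mem_mul ih ht
          rw [mul_assoc] at this
          exact SetLike.le_def.mp (mul_le_mul' le_rfl le_top) this
        | add a _ b _ ha hb => rw [add_mul]; exact add_mem ha hb
      rw [pow_succ' x]
      exact this x h
  have := key (n + 1)
  have hb := superAlg_exteriorPower_eq_bot n (n + 1) (Nat.lt_succ_self n)
  change (LinearMap.range (ExteriorAlgebra.ι ℂ : (Fin n → ℂ) →ₗ[ℂ] SuperAlg n)) ^ (n + 1) = ⊥ at hb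
  rw [hb, Submodule.bot_mul] at this
  exact this

/-- Left multiplication as a continuous linear map. -/
def saL (n : ℕ) (x : SuperAlg n) : SuperAlg n →L[ℂ] SuperAlg n :=
  LinearMap.toContinuousLinearMap (LinearMap.mulLeft ℂ x)

theorem saL_apply (n : ℕ) (x y : SuperAlg n) : saL n x y = x * y := rfl

theorem saL_pow (n : ℕ) (x : SuperAlg n) (k : ℕ) (y : SuperAlg n) :
    (saL n x ^ k) y = x ^ k * y := by
  induction k with
  | zero => simp
  | succ k ih =>
    rw [pow_succ', ContinuousLinearMap.mul_apply, ih, saL_apply, pow_succ', mul_assoc]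

end AlgFacts

/-- Let `U ⊆ ℂ` be open, `f = f₀ + θf₁` a superfunction on the
`(1|1)`-dimensional superdomain over `U` (`f₀, f₁ : U → Λ` holomorphic), `ẑ ∈ Λ₀` with
`ẑ^red ∈ U` and `ρ ∈ Λ₁`.  Then `f` is divisible by the irreducible divisor `z − ẑ − θρ`
(i.e. `f₀(z) = (z − ẑ)·g₀(z)` and `f₁(z) = (z − ẑ)·g₁(z) − ρ·g₀(z)` for holomorphic `g₀, g₁`)
if and only if `f(ẑ,ρ) = 0` and `(Df)(ẑ,ρ) = 0`, i.e. `f₀(ẑ) + ρ·f₁(ẑ) = 0` and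
`f₁(ẑ) + ρ·f₀′(ẑ) = 0`. -/
theorem statement0 (n : ℕ) (U : Set ℂ) (hU : IsOpen U) (f₀ f₁ : ℂ → SuperAlg n)
    (hf₀ : DifferentiableOn ℂ f₀ U) (hf₁ : DifferentiableOn ℂ f₁ U)
    (zh : SuperAlg n) (hzh : zh ∈ evenPart n) (hzred : reduce n zh ∈ U)
    (ρ : SuperAlg n) (hρ : ρ ∈ oddPart n) :
    (∃ g₀ g₁ : ℂ → SuperAlg n, DifferentiableOn ℂ g₀ U ∧ DifferentiableOn ℂ g₁ U ∧
        ∀ z ∈ U, f₀ z = (algebraMap ℂ (SuperAlg n) z - zh) * g₀ z ∧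
          f₁ z = (algebraMap ℂ (SuperAlg n) z - zh) * g₁ z - ρ * g₀ z) ↔
      (evalNilp n f₀ zh + ρ * evalNilp n f₁ zh = 0 ∧
        evalNilp n f₁ zh + ρ * evalNilp n (deriv f₀) zh = 0) := by
  haveI : CompleteSpace (SuperAlg n) := FiniteDimensional.complete ℂ _
  set a := reduce n zh with ha
  set ν := zh - algebraMap ℂ (SuperAlg n) a with hν
  have hcen : ∀ y, y * ν = ν * y := fun y => by
    rw [hν, mul_sub, sub_mul, sa_even_central n zh hzh y, Algebra.commutes]
  have hnil : ν ^ (n + 1) = 0 := sa_nilp n ν hcen (sa_sub_red n zh)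
  have hN : saL n ν ^ (n + 1) = 0 := by
    ext y
    rw [saL_pow, hnil, zero_mul]; rfl
  have hRN : Commute (saL n ρ) (saL n ν) := by
    ext y
    simp only [ContinuousLinearMap.mul_apply, saL_apply]
    rw [← mul_assoc, hcen, mul_assoc]
  have hR : ∀ x, saL n ρ (saL n ρ x) = 0 := fun x => by
    rw [saL_apply, saL_apply, ← mul_assoc, sa_odd_sq n ρ hρ, zero_mul]
  have hE : ∀ h, evalNilp n h zh = aE n (saL n ν) a h := fun h => by
    unfold evalNilp aE
    refine Finset.sum_congr rfl fun m _ => ?_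
    rw [saL_pow, ((show Commute _ ν from hcen _).pow_right m).eq]
  have hm : ∀ (z : ℂ) (y : SuperAlg n), (algebraMap ℂ (SuperAlg n) z - zh) * y
      = (z - a) • y + (- saL n ν) y := fun z y => by
    rw [ContinuousLinearMap.neg_apply, saL_apply, Algebra.smul_def, hν, map_sub]
    noncomm_ring
  have main := aE_main n (saL n ν) hU hzred hN (saL n ρ) hRN hR hf₀ hf₁
  rw [hE, hE, hE]
  simp only [hm]
  simp only [ContinuousLinearMap.neg_apply, saL_apply, ← sub_eq_add_neg] at main ⊢
  exact main

end
end

section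
/- Let U ⊆ ℂ be a nonempty open simply connected set. Define, on 4-tuples h = (h₀,h₁,h₂,h₃) of holomorphic functions U → Λ (representing the N=2 superfunction h₀ + θh₁ + ρh₂ + θρh₃ in two auxiliary odd variables θ, ρ), the operators D_C h := (h₂, −h₃, 0, 0) (representing ∂_ρ h) and D̂_C h := (h₁, 0, h₃ + h₀′, −h₁′) (representing (∂_θ + ρ∂_z)h). Then D_C∘D_C = 0 and D̂_C∘D̂_C = 0, and the Poincaré lemma holds: for any two such tuples f and g with D_C f = 0 and D̂_C g = 0 there exists a tuple H of holomorphic functions U → Λ with D_C H = f and D̂_C H = g, and H is unique up to adding a constant tuple (c,0,0,0) with c ∈ Λ. -/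
noncomputable section

open ExteriorAlgebra

/-- A tuple `(h₀, h₁, h₂, h₃)` of functions `ℂ → Λ`, representing the `N = 2` superfunction
`h₀ + θh₁ + ρh₂ + θρh₃` in the two auxiliary odd variables `θ`, `ρ`. -/
abbrev SF2 (n : ℕ) : Type :=
  (ℂ → SuperAlg n) × (ℂ → SuperAlg n) × (ℂ → SuperAlg n) × (ℂ → SuperAlg n)

/-- The operator `D_C = ∂_ρ`:  `D_C (h₀,h₁,h₂,h₃) = (h₂, −h₃, 0, 0)`. -/
def DC {n : ℕ} (h : SF2 n) : SF2 n :=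
  (h.2.2.1, fun z => -(h.2.2.2 z), fun _ => 0, fun _ => 0)

/-- The operator `D̂_C = ∂_θ + ρ∂_z`:  `D̂_C (h₀,h₁,h₂,h₃) = (h₁, 0, h₃ + h₀′, −h₁′)`. -/
def DhatC {n : ℕ} (h : SF2 n) : SF2 n :=
  (h.2.1, fun _ => 0, fun z => h.2.2.2 z + deriv h.1 z, fun z => -(deriv h.2.1 z))

/-- All four components are holomorphic on `U`. -/
def HolOn2 {n : ℕ} (U : Set ℂ) (h : SF2 n) : Prop :=
  DifferentiableOn ℂ h.1 U ∧ DifferentiableOn ℂ h.2.1 U ∧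
  DifferentiableOn ℂ h.2.2.1 U ∧ DifferentiableOn ℂ h.2.2.2 U

/-- Componentwise equality of two tuples on `U`. -/
def EqOn2 {n : ℕ} (U : Set ℂ) (h h' : SF2 n) : Prop :=
  Set.EqOn h.1 h'.1 U ∧ Set.EqOn h.2.1 h'.2.1 U ∧
  Set.EqOn h.2.2.1 h'.2.2.1 U ∧ Set.EqOn h.2.2.2 h'.2.2.2 U

open Set Filter Topology in
theorem exists_primitive_aux {E : Type*} [NormedAddCommGroup E] [NormedSpace ℂ E] [CompleteSpace E]
    (U : Set ℂ) (hU : IsOpen U) (hsc : SimplyConnectedSpace U) (f : ℂ → E)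
    (hf : DifferentiableOn ℂ f U) {F : Type} [TopologicalSpace F] [DiscreteTopology F]
    (e : F ≃ E) :
    ∃ H : ℂ → E, ∀ z ∈ U, HasDerivAt H (f z) z := by
  classical
  have hlpc : LocallyPathConnectedSpace U := hU.locallyPathConnectedSpace
  have h1 : ∀ x : U, ∃ r : ℝ, 0 < r ∧ ∃ G : ℂ → E, ∀ z ∈ Metric.ball (x : ℂ) r,
      HasDerivAt G (f z) z := by
    intro x
    obtain ⟨r, hr, hrU⟩ := Metric.isOpen_iff.mp hU x x.2
    obtain ⟨G, hG⟩ := (hf.mono hrU).isExactOn_ball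
    exact ⟨r, hr, G, hG⟩
  choose r hr G hG using h1
  have hlc : ∀ i j : U, ∀ x ∈ Metric.ball (i : ℂ) (r i) ∩ Metric.ball (j : ℂ) (r j),
      ∀ᶠ y in 𝓝 x, G i y - G j y = G i x - G j x := by
    intro i j x hx
    have ho : IsOpen (Metric.ball (i : ℂ) (r i) ∩ Metric.ball (j : ℂ) (r j)) :=
      Metric.isOpen_ball.inter Metric.isOpen_ball
    have hd : ∀ y ∈ Metric.ball (i : ℂ) (r i) ∩ Metric.ball (j : ℂ) (r j),
        HasDerivAt (fun y => G i y - G j y) 0 y := by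
      intro y hy
      simpa using (hG i y hy.1).fun_sub (hG j y hy.2)
    have h := ho.isOpen_inter_preimage_of_deriv_eq_zero
      (fun y hy => (hd y hy).differentiableAt.differentiableWithinAt)
      (fun y hy => (hd y hy).deriv) {G i x - G j x}
    filter_upwards [h.mem_nhds ⟨hx, rfl⟩] with y hy
    exact hy.2
  let Z : FiberBundleCore U U F :=
    { baseSet := fun i => Subtype.val ⁻¹' Metric.ball (i : ℂ) (r i)
      isOpen_baseSet := fun i => Metric.isOpen_ball.preimage continuous_subtype_val
      indexAt := id
      mem_baseSet_at := fun x => Metric.mem_ball_self (hr x)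
      coordChange := fun i j x v => e.symm (e v + (G i x - G j x))
      coordChange_self := by intro i x _ v; simp
      continuousOn_coordChange := by
        rintro i j ⟨x, v⟩ ⟨hx, -⟩
        apply ContinuousAt.continuousWithinAt
        refine ContinuousAt.congr (f := fun _ => e.symm (e v + (G i x - G j x))) continuousAt_const ?_
        have h := continuous_subtype_val.continuousAt.eventually (hlc i j x hx)
        have h2 : ∀ᶠ w in 𝓝 v, w = v := by simp [nhds_discrete]
        rw [nhds_prod_eq]
        filter_upwards [h.prod_mk h2] with p hp
        rw [hp.1, hp.2]
      coordChange_comp := by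
        intro i j k x _ v
        simp only [Equiv.apply_symm_apply]
        congr 1
        abel }
  have hcov : IsCoveringMap Z.proj :=
    IsCoveringMap.mk _ (fun _ => F) (fun x => Z.localTrivAt x) (fun x => Z.mem_localTrivAt_baseSet x)
  obtain ⟨a₀⟩ : Nonempty U := inferInstance
  obtain ⟨S, ⟨-, hS⟩, -⟩ := hcov.existsUnique_continuousMap_lifts (ContinuousMap.id U) a₀
    (⟨a₀, e.symm 0⟩ : Z.TotalSpace) rfl
  have hS' : ∀ x : U, (S x).1 = x := fun x => congrFun hS x
  let H : U → E := fun x => e (S x).2 + G (S x).1 x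
  have key : ∀ x : U, ∃ c : E, ∀ᶠ y : U in 𝓝 x, H y = G x y + c := by
    intro x
    have hc : ContinuousAt (fun y : U => (Z.localTrivAt x (S y)).2) x := by
      apply continuous_snd.continuousAt.comp
      refine ContinuousAt.comp (g := Z.localTrivAt x) ?_ S.continuous.continuousAt
      apply (Z.localTrivAt x).continuousAt
      rw [Z.mem_localTrivAt_source, hS']
      exact Z.mem_localTrivAt_baseSet x
    have h := hc.eventually_mem (mem_nhds_discrete.mpr (mem_singleton _))
    refine ⟨e (Z.localTrivAt x (S x)).2, ?_⟩
    filter_upwards [h] with y hy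
    rw [mem_singleton_iff] at hy
    rw [← hy, Z.localTrivAt_snd]
    change e (S y).2 + G (S y).1 y = G x y + e (e.symm (e (S y).2 + (G (S y).1 (S y).1 - G x (S y).1)))
    rw [hS' y]
    simp only [Equiv.apply_symm_apply]
    abel
  refine ⟨fun z => if hz : z ∈ U then H ⟨z, hz⟩ else 0, fun z hz => ?_⟩
  obtain ⟨c, hc⟩ := key ⟨z, hz⟩
  have hd := (hG ⟨z, hz⟩ z (Metric.mem_ball_self (hr _))).add_const c
  refine hd.congr_of_eventuallyEq ?_
  rw [nhds_subtype_eq_comap, eventually_comap] at hc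
  filter_upwards [hc, hU.mem_nhds hz] with y hy hyU
  simp only [hyU, dif_pos]
  exact hy ⟨y, hyU⟩ rfl

/-- Let `U ⊆ ℂ` be a nonempty open simply connected set.  Then
`D_C ∘ D_C = 0` and `D̂_C ∘ D̂_C = 0`, and the Poincaré lemma holds: for tuples `f`, `g` of
holomorphic functions on `U` with `D_C f = 0` and `D̂_C g = 0` on `U` there is a tuple `H` of
holomorphic functions on `U` with `D_C H = f` and `D̂_C H = g` on `U`, and `H` is unique up to
adding a constant tuple `(c, 0, 0, 0)` with `c ∈ Λ`. -/
theorem statement1 (n : ℕ) (U : Set ℂ) (hne : U.Nonempty) (hU : IsOpen U)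
    (hsc : SimplyConnectedSpace U) :
    (∀ h : SF2 n, DC (DC h) = 0) ∧ (∀ h : SF2 n, DhatC (DhatC h) = 0) ∧
    (∀ f g : SF2 n, HolOn2 U f → HolOn2 U g →
      EqOn2 U (DC f) 0 → EqOn2 U (DhatC g) 0 →
      ∃ H : SF2 n, HolOn2 U H ∧ EqOn2 U (DC H) f ∧ EqOn2 U (DhatC H) g ∧
        ∀ H' : SF2 n, HolOn2 U H' → EqOn2 U (DC H') f → EqOn2 U (DhatC H') g →
          ∃ c : SuperAlg n,
            Set.EqOn H'.1 (fun z => H.1 z + c) U ∧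
            Set.EqOn H'.2.1 H.2.1 U ∧
            Set.EqOn H'.2.2.1 H.2.2.1 U ∧
            Set.EqOn H'.2.2.2 H.2.2.2 U) := by
  refine ⟨fun h => ?_, fun h => ?_, ?_⟩
  · simp only [DC, neg_zero]
    rfl
  · have h0 : deriv (fun _ : ℂ => (0 : SuperAlg n)) = fun _ => 0 := by
      funext z; exact deriv_const z 0
    simp only [DhatC, h0, neg_zero, neg_add_cancel]
    rfl
  · rintro f g ⟨hf0, hf1, hf2, hf3⟩ ⟨hg0, hg1, hg2, hg3⟩ ⟨hDf0, hDf1, -, -⟩ ⟨hDg0, -, hDg2, -⟩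
    haveI : CompleteSpace (SuperAlg n) := FiniteDimensional.complete ℂ (SuperAlg n)
    obtain ⟨K, hK⟩ := exists_primitive_aux U hU hsc (fun z => g.2.2.1 z + f.2.1 z)
      (hg2.fun_add hf1) (F := WithDiscreteTopology (SuperAlg n)) (WithTopology.equiv _ _)
    have hpc : IsPreconnected U :=
      isPreconnected_iff_preconnectedSpace.mpr inferInstance
    have hKd : DifferentiableOn ℂ K U :=
      fun z hz => (hK z hz).differentiableAt.differentiableWithinAt
    refine ⟨(K, g.1, f.1, fun z => -f.2.1 z), ⟨hKd, hg0, hf0, hf1.fun_neg⟩,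
      ⟨fun z _ => rfl, fun z _ => neg_neg _, fun z hz => (hDf0 hz).symm, fun z hz => ?_⟩,
      ⟨fun z _ => rfl, fun z hz => (hDg0 hz).symm, fun z hz => ?_, fun z hz => ?_⟩, ?_⟩
    · have h : -(f.2.2.2 z) = 0 := hDf1 hz
      exact (neg_eq_zero.mp h).symm
    · change -f.2.1 z + deriv K z = g.2.2.1 z
      rw [(hK z hz).deriv]
      abel
    · have h : g.2.2.2 z + deriv g.1 z = 0 := hDg2 hz
      exact (eq_neg_of_add_eq_zero_left h).symm
    · rintro H' ⟨h0, h1, h2, h3⟩ ⟨e0, e1, -, -⟩ ⟨d0, -, d2, -⟩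
      have h3' : ∀ z ∈ U, H'.2.2.2 z = -f.2.1 z := by
        intro z hz
        have h : -(H'.2.2.2 z) = f.2.1 z := e1 hz
        rw [← h, neg_neg]
      obtain ⟨c, hc⟩ := hU.exists_eq_add_of_deriv_eq hpc h0 hKd (by
        intro z hz
        have h : H'.2.2.2 z + deriv H'.1 z = g.2.2.1 z := d2 hz
        rw [(hK z hz).deriv, ← h, h3' z hz]
        abel)
      exact ⟨c, hc, d0, e0, h3'⟩

end
end

section
/- Let A = [[X, α],[β, Y]] be an even (k|l)-supermatrix over Λ such that both X and Y are invertible. Then det(X − α·Y⁻¹·β)·det(Y − β·X⁻¹·α) = det(X)·det(Y). Equivalently, ber(A) is an invertible element of Λ₀ and ber*(A) = ber(A)⁻¹. -/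
/-!
Statement 2: For an even (k|l)-supermatrix `A = [[X, α],[β, Y]]` over the exterior algebra
`Λ = ⋀ ℂⁿ` with `X` and `Y` invertible, one has
`det(X − α·Y⁻¹·β)·det(Y − β·X⁻¹·α) = det(X)·det(Y)`; equivalently `ber(A)` is an invertible
element of `Λ₀` and `ber*(A) = ber(A)⁻¹`.

Since the relevant matrices have entries in the (central, commutative) even part `Λ₀` of the
noncommutative ring `Λ`, the determinant is formalized by the Leibniz formula `ncdet`, with the
products taken in the canonical order of the index set.
-/

noncomputable section

open ExteriorAlgebra

/-- The determinant of a square matrix over a (possibly noncommutative) ring, given by the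
Leibniz formula, the product over each permutation being taken in the canonical order of the
index set.  For matrices whose entries lie in a central commutative subring (such as `Λ₀ ⊆ Λ`)
this is the usual determinant. -/
def ncdet {R : Type*} [Ring R] {k : ℕ} (M : Matrix (Fin k) (Fin k) R) : R :=
  ∑ σ : Equiv.Perm (Fin k), ((Equiv.Perm.sign σ : ℤˣ) : ℤ) • (List.ofFn fun i => M (σ i) i).prod

/-- The even-even block `X` of a `(k|l)`-block matrix. -/
def Xblk (n k l : ℕ) (A : Matrix (Fin (k + l)) (Fin (k + l)) (SuperAlg n)) :
    Matrix (Fin k) (Fin k) (SuperAlg n) :=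
  fun i j => A (Fin.castAdd l i) (Fin.castAdd l j)

/-- The even-odd block `α` of a `(k|l)`-block matrix. -/
def alphaBlk (n k l : ℕ) (A : Matrix (Fin (k + l)) (Fin (k + l)) (SuperAlg n)) :
    Matrix (Fin k) (Fin l) (SuperAlg n) :=
  fun i j => A (Fin.castAdd l i) (Fin.natAdd k j)

/-- The odd-even block `β` of a `(k|l)`-block matrix. -/
def betaBlk (n k l : ℕ) (A : Matrix (Fin (k + l)) (Fin (k + l)) (SuperAlg n)) :
    Matrix (Fin l) (Fin k) (SuperAlg n) :=
  fun i j => A (Fin.natAdd k i) (Fin.castAdd l j)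

/-- The odd-odd block `Y` of a `(k|l)`-block matrix. -/
def Yblk (n k l : ℕ) (A : Matrix (Fin (k + l)) (Fin (k + l)) (SuperAlg n)) :
    Matrix (Fin l) (Fin l) (SuperAlg n) :=
  fun i j => A (Fin.natAdd k i) (Fin.natAdd k j)

/-- `A` is an even `(k|l)`-supermatrix: the diagonal blocks `X`, `Y` have entries in `Λ₀` and
the off-diagonal blocks `α`, `β` have entries in `Λ₁`. -/
def IsEvenSupermatrix (n k l : ℕ) (A : Matrix (Fin (k + l)) (Fin (k + l)) (SuperAlg n)) : Prop :=
  (∀ i j, Xblk n k l A i j ∈ evenPart n) ∧ (∀ i j, Yblk n k l A i j ∈ evenPart n) ∧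
  (∀ i j, alphaBlk n k l A i j ∈ oddPart n) ∧ (∀ i j, betaBlk n k l A i j ∈ oddPart n)

/-- The Berezinian `ber(A) = det(X − α·Y⁻¹·β)·det(Y)⁻¹` (defined when `Y` is invertible). -/
def ber (n k l : ℕ) (A : Matrix (Fin (k + l)) (Fin (k + l)) (SuperAlg n)) : SuperAlg n :=
  ncdet (Xblk n k l A - alphaBlk n k l A * Ring.inverse (Yblk n k l A) * betaBlk n k l A) *
    Ring.inverse (ncdet (Yblk n k l A))

/-- The inverse Berezinian `ber*(A) = det(X)⁻¹·det(Y − β·X⁻¹·α)` (defined when `X` is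
invertible). -/
def berStar (n k l : ℕ) (A : Matrix (Fin (k + l)) (Fin (k + l)) (SuperAlg n)) : SuperAlg n :=
  Ring.inverse (ncdet (Xblk n k l A)) *
    ncdet (Yblk n k l A - betaBlk n k l A * Ring.inverse (Xblk n k l A) * alphaBlk n k l A)

structure OddData {R S : Type} [Ring R] [CommRing S] (φ : S →+* R) (O : AddSubgroup R) : Prop where
  inj : Function.Injective φ
  prod : ∀ a ∈ O, ∀ b ∈ O, ∃ s, φ s = a * b
  anti : ∀ a ∈ O, ∀ b ∈ O, a * b = -(b * a)
  sq : ∀ a ∈ O, a * a = 0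
  smul : ∀ s, ∀ a ∈ O, φ s * a ∈ O

def SD {R S : Type} [Ring R] [CommRing S] (φ : S →+* R) (O : AddSubgroup R)
    (m p : Type) [Fintype m] [Fintype p] [DecidableEq m] [DecidableEq p] : Prop :=
  ∀ (a : Matrix m p R) (c : Matrix p m R), (∀ i j, a i j ∈ O) → (∀ i j, c i j ∈ O) →
    ∀ (P : Matrix m m S) (Q : Matrix p p S), P.map φ = a * c → Q.map φ = c * a →
      (1 - P).det * (1 - Q).det = 1

section SDlemmas

variable {R S : Type} [Ring R] [CommRing S] {φ : S →+* R} {O : AddSubgroup R}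
variable {m p q : Type} [Fintype m] [Fintype p] [DecidableEq m] [DecidableEq p]
  [Fintype q] [DecidableEq q]

theorem OddData.lift {m p q : Type} [Fintype p] (h : OddData φ O)
    (a : Matrix m p R) (c : Matrix p q R)
    (ha : ∀ i j, a i j ∈ O) (hc : ∀ i j, c i j ∈ O) : ∃ P : Matrix m q S, P.map φ = a * c := by
  have : ∀ i j, ∃ s, φ s = (a * c) i j := by
    intro i j
    rw [Matrix.mul_apply]
    choose f hf using fun x => h.prod (a i x) (ha i x) (c x j) (hc x j)
    exact ⟨∑ x, f x, by simp [hf]⟩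
  choose f hf using this
  exact ⟨Matrix.of f, by ext i j; simp [hf]⟩

theorem OddData.smul_mat {m p q : Type} [Fintype p] (h : OddData φ O)
    (N : Matrix m p S) (c : Matrix p q R) (hc : ∀ i j, c i j ∈ O) :
    ∀ i j, (N.map φ * c) i j ∈ O := by
  intro i j
  rw [Matrix.mul_apply]
  exact O.sum_mem fun x _ => h.smul _ _ (hc x j)

theorem OddData.map_inj {m p : Type} (h : OddData φ O)
    {M N : Matrix m p S} (e : M.map φ = N.map φ) : M = N :=
  Matrix.map_injective h.inj e

theorem SD.symm (h : SD φ O m p) : SD φ O p m := by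
  intro a c ha hc P Q hP hQ
  rw [mul_comm]
  exact h c a hc ha Q P hQ hP

theorem SD.reindex (h : SD φ O m p) (e : p ≃ q) : SD φ O m q := by
  intro a c ha hc P Q hP hQ
  have := h (a.submatrix id e) (c.submatrix e id) (fun i j => ha _ _) (fun i j => hc _ _)
    P (Q.submatrix e e) (by rw [hP]; ext i j; simp [Matrix.mul_apply, e.sum_comp (fun x => a i x * c x j)])
      (by rw [← Matrix.submatrix_map, hQ]; ext i j; simp [Matrix.mul_apply])
  rw [← this, ← Matrix.det_submatrix_equiv_self e (1 - Q)]
  simp [Matrix.submatrix_sub]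

theorem SD.empty (h : OddData φ O) [IsEmpty p] : SD φ O m p := by
  intro a c ha hc P Q hP hQ
  have h0 : a * c = 0 := by ext i j; simp [Matrix.mul_apply]
  have hP0 : (1 - P).map φ = (1 : Matrix m m S).map φ := by
    rw [Matrix.map_sub _ (map_sub φ), hP, h0, sub_zero]
  rw [Matrix.map_injective h.inj hP0]
  simp

theorem SD.unit (h : OddData φ O) : SD φ O Unit Unit := by
  intro a c ha hc P Q hP hQ
  simp only [Matrix.det_unique, Matrix.sub_apply, Matrix.one_apply_eq]
  have h1 := congrFun (congrFun hP default) default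
  have h2 := congrFun (congrFun hQ default) default
  simp only [Matrix.map_apply, Matrix.mul_apply, Finset.univ_unique, Finset.sum_singleton] at h1 h2
  apply h.inj
  set x := a default default
  set y := c default default
  have hx : x ∈ O := ha _ _
  have hy : y ∈ O := hc _ _
  have h3 := h.anti x hx y hy
  have h4 : x * y * (y * x) = 0 := by
    rw [mul_assoc, ← mul_assoc y y x, h.sq y hy]; simp
  simp only [map_mul, map_sub, map_one, h1, h2]
  rw [sub_mul, mul_sub, mul_sub, h4, mul_one, mul_one, one_mul, h3]
  simp

theorem SD.sum (h : OddData φ O) (h1 : SD φ O m p) (h2 : SD φ O m q) : SD φ O m (p ⊕ q) := by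
  intro a c ha hc P Q hP hQ
  obtain ⟨a1, a2, rfl⟩ : ∃ a1 a2, a = Matrix.fromCols a1 a2 :=
    ⟨_, _, (Matrix.fromCols_toCols a).symm⟩
  obtain ⟨c1, c2, rfl⟩ : ∃ c1 c2, c = Matrix.fromRows c1 c2 :=
    ⟨_, _, (Matrix.fromRows_toRows c).symm⟩
  have ha1 : ∀ i j, a1 i j ∈ O := fun i j => by simpa using ha i (Sum.inl j)
  have ha2 : ∀ i j, a2 i j ∈ O := fun i j => by simpa using ha i (Sum.inr j)
  have hc1 : ∀ i j, c1 i j ∈ O := fun i j => by simpa using hc (Sum.inl i) j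
  have hc2 : ∀ i j, c2 i j ∈ O := fun i j => by simpa using hc (Sum.inr i) j
  rw [Matrix.fromCols_mul_fromRows] at hP
  rw [Matrix.fromRows_mul_fromCols] at hQ
  obtain ⟨P1, hP1⟩ := h.lift a1 c1 ha1 hc1
  obtain ⟨P2, hP2⟩ := h.lift a2 c2 ha2 hc2
  obtain ⟨Q11, hQ11⟩ := h.lift c1 a1 hc1 ha1
  obtain ⟨Q12, hQ12⟩ := h.lift c1 a2 hc1 ha2
  obtain ⟨Q21, hQ21⟩ := h.lift c2 a1 hc2 ha1
  obtain ⟨Q22, hQ22⟩ := h.lift c2 a2 hc2 ha2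
  have eP : P = P1 + P2 := h.map_inj (by
    rw [hP, ← hP1, ← hP2, Matrix.map_add _ (map_add φ)])
  have eQ : Q = Matrix.fromBlocks Q11 Q12 Q21 Q22 := h.map_inj (by
    rw [hQ, Matrix.fromBlocks_map, hQ11, hQ12, hQ21, hQ22])
  have d1 := h1 a1 c1 ha1 hc1 P1 Q11 hP1 hQ11
  have uP : IsUnit (1 - P1).det := IsUnit.of_mul_eq_one _ d1
  have uQ : IsUnit (1 - Q11).det := IsUnit.of_mul_eq_one _ (by rw [mul_comm]; exact d1)
  have iQ : Invertible (1 - Q11) := Matrix.invertibleOfIsUnitDet _ uQ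
  set N := (1 - P1)⁻¹ with hN
  have hN1 : N * (1 - P1) = 1 := Matrix.nonsing_inv_mul _ uP
  have hN2 : (1 - P1) * N = 1 := Matrix.mul_nonsing_inv _ uP
  have ha2' := h.smul_mat N a2 ha2
  obtain ⟨Q', hQ'⟩ := h.lift c2 (N.map φ * a2) hc2 ha2'
  have d2 := h2 (N.map φ * a2) c2 ha2' hc2 (N * P2) Q'
    (by rw [Matrix.map_mul, hP2, Matrix.mul_assoc]) hQ'
  have e1 : 1 - P = (1 - P1) * (1 - N * P2) := by
    rw [mul_sub, ← mul_assoc, hN2, eP]; simp [sub_sub]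
  have e2 : 1 - Q = Matrix.fromBlocks (1 - Q11) (-Q12) (-Q21) (1 - Q22) := by
    rw [eQ, ← Matrix.fromBlocks_one, sub_eq_add_neg, Matrix.fromBlocks_neg, Matrix.fromBlocks_add]
    simp [sub_eq_add_neg]
  have hM : (1 - Q11) * ⅟(1 - Q11) = 1 := mul_invOf_self _
  set M := ⅟(1 - Q11)
  have hMφ : (1 - c1 * a1) * M.map φ = 1 := by
    have := congrArg (fun X => X.map φ) hM
    simp only [Matrix.map_mul] at this
    rw [Matrix.map_sub _ (map_sub φ), hQ11] at this
    simpa using this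
  have hNφ : N.map φ * (1 - a1 * c1) = 1 := by
    have := congrArg (fun X => X.map φ) hN1
    simp only [Matrix.map_mul] at this
    rw [Matrix.map_sub _ (map_sub φ), hP1] at this
    simpa using this
  have key : N.map φ = 1 + a1 * M.map φ * c1 := by
    have : (1 - a1 * c1) * (1 + a1 * M.map φ * c1) = 1 := by
      have e : (1 - a1 * c1) * (1 + a1 * M.map φ * c1)
          = 1 - a1 * c1 + a1 * ((1 - c1 * a1) * M.map φ) * c1 := by
        simp only [Matrix.sub_mul, Matrix.mul_sub, Matrix.mul_add, Matrix.one_mul, Matrix.mul_one,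
          Matrix.mul_assoc]
      rw [e, hMφ]; simp
    calc N.map φ = N.map φ * ((1 - a1 * c1) * (1 + a1 * M.map φ * c1)) := by rw [this, mul_one]
      _ = _ := by rw [← mul_assoc, hNφ, one_mul]
  have e3 : Q' = Q22 + Q21 * M * Q12 := h.map_inj (by
    rw [hQ', Matrix.map_add _ (map_add φ), Matrix.map_mul, Matrix.map_mul, hQ22, hQ21, hQ12, key]
    simp only [Matrix.mul_add, Matrix.add_mul, Matrix.one_mul, Matrix.mul_assoc])
  rw [e1, e2, Matrix.det_fromBlocks₁₁, Matrix.det_mul]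
  have e4 : 1 - Q22 - -Q21 * M * -Q12 = 1 - Q' := by rw [e3]; simp [sub_sub]
  rw [e4]
  calc _ = ((1 - P1).det * (1 - Q11).det) * ((1 - N * P2).det * (1 - Q').det) := by ring
    _ = 1 := by rw [d1, d2, one_mul]

theorem SD.finStep (h : OddData φ O) (h1 : SD φ O m Unit) (l : ℕ) : SD φ O m (Fin l) := by
  induction l with
  | zero => exact SD.empty h
  | succ l ih =>
    exact (SD.sum h ih h1).reindex
      ((Equiv.optionEquivSumPUnit (Fin l)).symm.trans (finSuccEquiv l).symm)

theorem SD.fin (h : OddData φ O) (k l : ℕ) : SD φ O (Fin k) (Fin l) :=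
  SD.finStep h (SD.finStep h (SD.unit h) k).symm l

theorem ncdet_map (φ : S →+* R) {k : ℕ} (M : Matrix (Fin k) (Fin k) S) :
    ncdet (M.map φ) = φ M.det := by
  rw [ncdet, Matrix.det_apply, map_sum]
  refine Finset.sum_congr rfl fun σ _ => ?_
  rw [← List.prod_ofFn, Units.smul_def, map_zsmul, map_list_prod, List.map_ofFn]
  rfl

theorem ringInverse_map {T U : Type} [Ring T] [Ring U] (f : T →+* U) {x : T} (hx : IsUnit x) :
    Ring.inverse (f x) = f (Ring.inverse x) := by
  obtain ⟨u, rfl⟩ := hx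
  have : f (u : T) = (Units.map (f : T →* U) u : Uˣ) := rfl
  rw [this, Ring.inverse_unit, Ring.inverse_unit]
  rfl

theorem abstract_main (h : OddData φ O) {k l : ℕ} (X : Matrix (Fin k) (Fin k) S)
    (Y : Matrix (Fin l) (Fin l) S) (hX : IsUnit X) (hY : IsUnit Y)
    (a : Matrix (Fin k) (Fin l) R) (c : Matrix (Fin l) (Fin k) R)
    (ha : ∀ i j, a i j ∈ O) (hc : ∀ i j, c i j ∈ O) :
    ∃ (P : Matrix (Fin k) (Fin k) S) (Q : Matrix (Fin l) (Fin l) S),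
      X.map φ - a * Ring.inverse (Y.map φ) * c = P.map φ ∧
      Y.map φ - c * Ring.inverse (X.map φ) * a = Q.map φ ∧
      P.det * Q.det = X.det * Y.det := by
  have iX : Ring.inverse (X.map φ) = (Ring.inverse X).map φ := ringInverse_map φ.mapMatrix hX
  have iY : Ring.inverse (Y.map φ) = (Ring.inverse Y).map φ := ringInverse_map φ.mapMatrix hY
  have mX := Ring.mul_inverse_cancel X hX
  have mY := Ring.mul_inverse_cancel Y hY
  rw [iX, iY]
  set X' := Ring.inverse X
  set Y' := Ring.inverse Y
  have ha' := h.smul_mat X' a ha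
  have hc' := h.smul_mat Y' c hc
  obtain ⟨P, hP⟩ := h.lift _ _ ha' hc'
  obtain ⟨Q, hQ⟩ := h.lift _ _ hc' ha'
  have hd := SD.fin h k l _ _ ha' hc' P Q hP hQ
  have mXφ : X.map φ * X'.map φ = 1 := by rw [← Matrix.map_mul, mX]; simp
  have mYφ : Y.map φ * Y'.map φ = 1 := by rw [← Matrix.map_mul, mY]; simp
  refine ⟨X * (1 - P), Y * (1 - Q), ?_, ?_, ?_⟩
  · rw [mul_sub, mul_one, Matrix.map_sub _ (map_sub φ), Matrix.map_mul, hP, Matrix.mul_assoc a,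
      Matrix.mul_assoc (X'.map φ), ← Matrix.mul_assoc (X.map φ), mXφ, Matrix.one_mul]
  · rw [mul_sub, mul_one, Matrix.map_sub _ (map_sub φ), Matrix.map_mul, hQ, Matrix.mul_assoc c,
      Matrix.mul_assoc (Y'.map φ), ← Matrix.mul_assoc (Y.map φ), mYφ, Matrix.one_mul]
  · rw [Matrix.det_mul, Matrix.det_mul]
    calc _ = X.det * Y.det * ((1 - P).det * (1 - Q).det) := by ring
      _ = _ := by rw [hd, mul_one]

end SDlemmas

section concrete

theorem ext_ortho (n : ℕ) (x y : Fin n → ℂ) :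
    QuadraticMap.IsOrtho (0 : QuadraticForm ℂ (Fin n → ℂ))
      (QuadraticMap.Isometry.id (0 : QuadraticForm ℂ (Fin n → ℂ)) x)
      (QuadraticMap.Isometry.id (0 : QuadraticForm ℂ (Fin n → ℂ)) y) := by
  simp [QuadraticMap.IsOrtho]

theorem eq_zero_of_eq_neg (n : ℕ) {x : SuperAlg n} (h : x = -x) : x = 0 := by
  have h2 : (2 : ℂ) • x = 0 := by
    rw [two_smul]
    nth_rewrite 1 [h]
    simp
  have h3 : x = (2⁻¹ : ℂ) • ((2 : ℂ) • x) := by rw [smul_smul]; norm_num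
  rw [h3, h2, smul_zero]

theorem even_comm (n : ℕ) {x y : SuperAlg n} (hx : x ∈ evenPart n) (hy : y ∈ evenPart n) :
    x * y = y * x := by
  have := CliffordAlgebra.commute_map_mul_map_of_isOrtho_of_mem_evenOdd_zero_left
    _ _ (ext_ortho n) x y hx hy
  rw [CliffordAlgebra.map_id] at this
  exact this

theorem odd_anti (n : ℕ) {x y : SuperAlg n} (hx : x ∈ oddPart n) (hy : y ∈ oddPart n) :
    x * y = -(y * x) := by
  have := CliffordAlgebra.map_mul_map_eq_neg_of_isOrtho_of_mem_evenOdd_one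
    _ _ (ext_ortho n) x y hx hy
  rw [CliffordAlgebra.map_id, neg_mul] at this
  exact this

abbrev evenSub (n : ℕ) : Subalgebra ℂ (SuperAlg n) :=
  CliffordAlgebra.even (0 : QuadraticForm ℂ (Fin n → ℂ))

instance evenCommRing (n : ℕ) : CommRing (evenSub n) :=
  { (inferInstance : Ring (evenSub n)) with
    mul_comm := fun a b => Subtype.ext (even_comm n a.2 b.2) }

def evenIncl (n : ℕ) : evenSub n →+* SuperAlg n where
  toFun x := x.1
  map_one' := rfl
  map_zero' := rfl
  map_mul' _ _ := rfl
  map_add' _ _ := rfl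

theorem oddData (n : ℕ) : OddData (evenIncl n) (oddPart n).toAddSubgroup where
  inj := Subtype.val_injective
  prod a ha b hb := ⟨⟨a * b, by
    have := SetLike.mul_mem_graded (A := CliffordAlgebra.evenOdd
      (0 : QuadraticForm ℂ (Fin n → ℂ))) (i := 1) (j := 1) ha hb
    exact this⟩, rfl⟩
  anti a ha b hb := odd_anti n ha hb
  sq a ha := by
    have h := odd_anti n ha ha
    exact eq_zero_of_eq_neg n h
  smul s a ha := by
    have := SetLike.mul_mem_graded (A := CliffordAlgebra.evenOdd
      (0 : QuadraticForm ℂ (Fin n → ℂ))) (i := 0) (j := 1) s.2 ha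
    exact this

theorem even_of_involute (n : ℕ) (x : SuperAlg n)
    (hx : CliffordAlgebra.involute (Q := (0 : QuadraticForm ℂ (Fin n → ℂ))) x = x) :
    x ∈ evenPart n := by
  have ht : x ∈ evenPart n ⊔ oddPart n := by
    rw [evenPart, oddPart, (CliffordAlgebra.evenOdd_isCompl _).sup_eq_top]; trivial
  obtain ⟨y, hy, z, hz, rfl⟩ := Submodule.mem_sup.mp ht
  rw [map_add, CliffordAlgebra.involute_eq_of_mem_even hy,
    CliffordAlgebra.involute_eq_of_mem_odd hz] at hx
  have h1 : -z = z := add_left_cancel hx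
  have h2 : z = 0 := eq_zero_of_eq_neg n h1.symm
  rw [h2, add_zero]; exact hy

theorem lift_unit (n k : ℕ) (X : Matrix (Fin k) (Fin k) (SuperAlg n))
    (hX : ∀ i j, X i j ∈ evenPart n) (hu : IsUnit X) :
    ∃ X' : Matrix (Fin k) (Fin k) (evenSub n), X'.map (evenIncl n) = X ∧ IsUnit X' := by
  let σ : SuperAlg n →+* SuperAlg n :=
    (CliffordAlgebra.involute (Q := (0 : QuadraticForm ℂ (Fin n → ℂ)))).toRingHom
  obtain ⟨u, rfl⟩ := hu
  have hσ : σ.mapMatrix (u : Matrix (Fin k) (Fin k) (SuperAlg n)) = u := by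
    ext i j
    exact CliffordAlgebra.involute_eq_of_mem_even (hX i j)
  have h1 : (u : Matrix (Fin k) (Fin k) (SuperAlg n)) * σ.mapMatrix (↑u⁻¹) = 1 := by
    conv_lhs => rw [← hσ]
    rw [← map_mul, Units.mul_inv, map_one]
  have h2 : σ.mapMatrix (↑u⁻¹ : Matrix (Fin k) (Fin k) (SuperAlg n)) = ↑u⁻¹ :=
    (Units.inv_eq_of_mul_eq_one_right h1).symm
  have h3 : ∀ i j, (↑u⁻¹ : Matrix (Fin k) (Fin k) (SuperAlg n)) i j ∈ evenPart n := fun i j =>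
    even_of_involute n _ (congrFun (congrFun h2 i) j)
  let X' : Matrix (Fin k) (Fin k) (evenSub n) := Matrix.of fun i j => ⟨_, hX i j⟩
  let Z' : Matrix (Fin k) (Fin k) (evenSub n) := Matrix.of fun i j => ⟨_, h3 i j⟩
  have eX : X'.map (evenIncl n) = u := by ext i j; rfl
  have eZ : Z'.map (evenIncl n) = ↑u⁻¹ := by ext i j; rfl
  refine ⟨X', eX, ⟨⟨X', Z', ?_, ?_⟩, rfl⟩⟩
  · apply (oddData n).map_inj
    rw [Matrix.map_mul, eX, eZ, Units.mul_inv]; simp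
  · apply (oddData n).map_inj
    rw [Matrix.map_mul, eX, eZ, Units.inv_mul]; simp

end concrete

/-- Let `A = [[X, α],[β, Y]]` be an even `(k|l)`-supermatrix over `Λ` such that
both `X` and `Y` are invertible.  Then
`det(X − α·Y⁻¹·β)·det(Y − β·X⁻¹·α) = det(X)·det(Y)`.  Equivalently, `ber(A)` is an invertible
element of `Λ₀` and `ber*(A) = ber(A)⁻¹`. -/
theorem statement2 (n k l : ℕ) (A : Matrix (Fin (k + l)) (Fin (k + l)) (SuperAlg n))
    (hA : IsEvenSupermatrix n k l A)
    (hX : IsUnit (Xblk n k l A)) (hY : IsUnit (Yblk n k l A)) :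
    ncdet (Xblk n k l A - alphaBlk n k l A * Ring.inverse (Yblk n k l A) * betaBlk n k l A) *
        ncdet (Yblk n k l A - betaBlk n k l A * Ring.inverse (Xblk n k l A) * alphaBlk n k l A)
      = ncdet (Xblk n k l A) * ncdet (Yblk n k l A) ∧
    ber n k l A ∈ evenPart n ∧ IsUnit (ber n k l A) ∧
    berStar n k l A = Ring.inverse (ber n k l A) := by
  obtain ⟨hXe, hYe, ha, hc⟩ := hA
  obtain ⟨X, eX, uX⟩ := lift_unit n k _ hXe hX
  obtain ⟨Y, eY, uY⟩ := lift_unit n l _ hYe hY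
  obtain ⟨P, Q, hP, hQ, hd⟩ := abstract_main (oddData n) X Y uX uY _ _ ha hc
  rw [eX, eY] at hP hQ
  have dX : IsUnit X.det := (Matrix.isUnit_iff_isUnit_det X).mp uX
  have dY : IsUnit Y.det := (Matrix.isUnit_iff_isUnit_det Y).mp uY
  have dPQ : IsUnit (P.det * Q.det) := hd ▸ dX.mul dY
  have dP : IsUnit P.det := isUnit_of_mul_isUnit_left dPQ
  have hb : ber n k l A = evenIncl n (P.det * Ring.inverse Y.det) := by
    rw [ber, hP, ← eY, ncdet_map, ncdet_map, ringInverse_map _ dY, map_mul]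
  have hbs : berStar n k l A = evenIncl n (Ring.inverse X.det * Q.det) := by
    rw [berStar, hQ, ← eX, ncdet_map, ncdet_map, ringInverse_map _ dX, map_mul]
  have hbu : IsUnit (P.det * Ring.inverse Y.det) := dP.mul dY.ringInverse
  refine ⟨?_, ?_, ?_, ?_⟩
  · rw [hP, hQ, ← eX, ← eY, ncdet_map, ncdet_map, ncdet_map, ncdet_map, ← map_mul, ← map_mul, hd]
  · rw [hb]; exact (P.det * Ring.inverse Y.det).2
  · rw [hb]; exact hbu.map _
  · rw [hb, hbs, ringInverse_map _ hbu]
    congr 1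
    have h1 : (Ring.inverse X.det * Q.det) * (P.det * Ring.inverse Y.det) = 1 := by
      calc _ = Ring.inverse X.det * (P.det * Q.det) * Ring.inverse Y.det := by ring
        _ = (Ring.inverse X.det * X.det) * (Y.det * Ring.inverse Y.det) := by rw [hd]; ring
        _ = 1 := by rw [Ring.inverse_mul_cancel _ dX, Ring.mul_inverse_cancel _ dY, one_mul]
    have h2 := Ring.mul_inverse_cancel _ hbu
    calc _ = (Ring.inverse X.det * Q.det) *
          ((P.det * Ring.inverse Y.det) * Ring.inverse (P.det * Ring.inverse Y.det)) := by
            rw [h2, mul_one]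
      _ = _ := by rw [← mul_assoc, h1, one_mul]

end
end

section
/- Let A = [[X, α],[β, Y]] be an even (k|l)-supermatrix over Λ with Y invertible, set m := k+l, and let i, j ∈ {1,…,k} (both indices even). Assume the (m−1)×(m−1) matrix A^{ij}, obtained from A by deleting row i and column j, is invertible over Λ. Then A^{ij} is (with the inherited indexing) an even (k−1|l)-supermatrix whose odd-odd block Y is invertible, and the quasideterminant |A|_{ij} := a_{ij} − Σ_{p≠j, q≠i} a_{ip}·((A^{ij})⁻¹)_{pq}·a_{qj} (where the rows of (A^{ij})⁻¹ are indexed by {1,…,m}∖{j} and its columns by {1,…,m}∖{i}) satisfies |A|_{ij}·ber(A^{ij}) = (−1)^{i+j}·ber(A). -/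
noncomputable section

open ExteriorAlgebra

/-- The canonical (order-preserving) embedding of `Fin N` onto the complement of `i` in
`Fin M`, where `M = N + 1`; `skipIdx h i p` is the `p`-th element of `{0, …, M-1} ∖ {i}`. -/
def skipIdx {N M : ℕ} (h : N + 1 = M) (i : Fin M) : Fin N → Fin M :=
  fun p => Fin.cast h ((Fin.cast h.symm i).succAbove p)

/-- The matrix `A^{ij}` obtained from the square matrix `A` by deleting row `i` and column `j`,
with rows and columns reindexed by the order-preserving identifications with `Fin N`. -/
def delRC {R : Type*} [Ring R] {N M : ℕ} (h : N + 1 = M) (A : Matrix (Fin M) (Fin M) R)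
    (i j : Fin M) : Matrix (Fin N) (Fin N) R :=
  fun p q => A (skipIdx h i p) (skipIdx h j q)

/-- The Gelfand–Retakh quasideterminant
`|A|_{ij} = a_{ij} − Σ_{p≠j, q≠i} a_{ip}·((A^{ij})⁻¹)_{pq}·a_{qj}`, where the rows of
`(A^{ij})⁻¹` are indexed by the complement of `j` and its columns by the complement of `i`
(both via their order-preserving identifications with `Fin N`). -/
def quasidet {R : Type*} [Ring R] {N M : ℕ} (h : N + 1 = M) (A : Matrix (Fin M) (Fin M) R)
    (i j : Fin M) : R :=
  A i j - ∑ p : Fin N, ∑ q : Fin N,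
    A i (skipIdx h j p) * (Ring.inverse (delRC h A i j)) p q * A (skipIdx h i q) j

theorem skipIdx_castAdd {k l : ℕ} (h : (k + l) + 1 = (k + 1) + l) (i : Fin (k+1)) (p : Fin k) :
    skipIdx h (Fin.castAdd l i) (Fin.castAdd l p) = Fin.castAdd l (i.succAbove p) := by
  apply Fin.ext
  simp only [skipIdx, Fin.succAbove, Fin.lt_def]
  simp only [Fin.val_cast, Fin.val_castAdd, Fin.val_castSucc]
  split_ifs <;> simp

theorem skipIdx_natAdd {k l : ℕ} (h : (k + l) + 1 = (k + 1) + l) (i : Fin (k+1)) (p : Fin l) :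
    skipIdx h (Fin.castAdd l i) (Fin.natAdd k p) = Fin.natAdd (k+1) p := by
  apply Fin.ext
  simp only [skipIdx, Fin.succAbove, Fin.lt_def]
  simp only [Fin.val_cast, Fin.val_castAdd, Fin.val_castSucc, Fin.val_natAdd]
  rw [if_neg (by omega)]
  simp; omega

theorem exists_vec {R : Type*} [Ring R] {N M : ℕ} (h : N + 1 = M) (A : Matrix (Fin M) (Fin M) R)
    (i j : Fin M) (hd : IsUnit (delRC h A i j)) :
    ∃ w : Fin M → R, w j = 1 ∧ A.mulVec w = Pi.single i (quasidet h A i j) := by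
  subst h
  set D := delRC rfl A i j with hD
  set c : Fin N → R := fun q => A (i.succAbove q) j with hc
  set v := (Ring.inverse D).mulVec c with hv
  refine ⟨Fin.insertNth j 1 (-v), by simp, ?_⟩
  ext r
  rw [Matrix.mulVec, dotProduct, Fin.sum_univ_succAbove _ j]
  simp only [Fin.insertNth_apply_same, Fin.insertNth_apply_succAbove, mul_one, Pi.neg_apply,
    mul_neg, Finset.sum_neg_distrib]
  rcases Fin.eq_self_or_eq_succAbove i r with rfl | ⟨r', rfl⟩
  · rw [Pi.single_eq_same, quasidet, sub_eq_add_neg]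
    congr 2
    refine Finset.sum_congr rfl fun p _ => ?_
    rw [hv, Matrix.mulVec, dotProduct, Finset.mul_sum]
    refine Finset.sum_congr rfl fun q _ => ?_
    rw [← mul_assoc]
    rfl
  · rw [Pi.single_eq_of_ne (Fin.succAbove_ne _ _)]
    have : D.mulVec v = c := by
      rw [hv, Matrix.mulVec_mulVec, Ring.mul_inverse_cancel _ hd, Matrix.one_mulVec]
    have := congrFun this r'
    rw [← sub_eq_add_neg, sub_eq_zero]
    exact this.symm

theorem inverse_central {R : Type*} [Ring R] {l : ℕ} (M : Matrix (Fin l) (Fin l) R)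
    (hM : ∀ p q, M p q ∈ Subring.center R) (hu : IsUnit M) :
    ∀ p q, Ring.inverse M p q ∈ Subring.center R := by
  intro p q
  rw [Subring.mem_center_iff]
  intro g
  have hc : Commute (Matrix.diagonal fun _ : Fin l => g) M := by
    ext a b
    rw [Matrix.diagonal_mul, Matrix.mul_diagonal]
    exact Subring.mem_center_iff.1 (hM a b) g
  obtain ⟨u, rfl⟩ := hu
  have := hc.units_inv_right
  rw [Ring.inverse_unit]
  have := congrFun (congrFun this p) q
  rwa [Matrix.diagonal_mul, Matrix.mul_diagonal] at this

theorem ncdet_map_s4 {R : Type*} [Ring R] {k : ℕ} (S : Matrix (Fin k) (Fin k) (Subring.center R)) :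
    ncdet (S.map (Subring.center R).subtype) = (Subring.center R).subtype S.det := by
  rw [Matrix.det_apply, map_sum, ncdet]
  refine Finset.sum_congr rfl fun σ _ => ?_
  rw [Units.smul_def, map_zsmul, ← List.prod_ofFn, map_list_prod, List.map_ofFn]
  rfl

theorem det_key {R : Type*} [Ring R] {k : ℕ} (S : Matrix (Fin (k+1)) (Fin (k+1)) R)
    (hS : ∀ p q, S p q ∈ Subring.center R) (i j : Fin (k+1)) (q : R) (w : Fin (k+1) → R)
    (hw : w j = 1) (hk : S.mulVec w = Pi.single i q) :
    q * ncdet (S.submatrix i.succAbove j.succAbove) =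
      ((-1 : ℤ) ^ ((i : ℕ) + (j : ℕ))) • ncdet S := by
  obtain ⟨T, rfl⟩ : ∃ T : Matrix (Fin (k+1)) (Fin (k+1)) (Subring.center R),
      S = T.map (Subring.center R).subtype := ⟨fun p q => ⟨S p q, hS p q⟩, rfl⟩
  rw [Matrix.submatrix_map, ncdet_map_s4, ncdet_map_s4]
  have h1 := congrArg (T.adjugate.map (Subring.center R).subtype).mulVec hk
  rw [Matrix.mulVec_mulVec, ← Matrix.map_mul, Matrix.adjugate_mul] at h1
  have h2 := congrFun h1 j
  have h3 : ((T.det • (1 : Matrix (Fin (k+1)) (Fin (k+1)) (Subring.center R))).map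
      (Subring.center R).subtype).mulVec w j = (Subring.center R).subtype T.det := by
    rw [Matrix.smul_one_eq_diagonal, Matrix.diagonal_map (map_zero _), Matrix.mulVec_diagonal, hw,
      mul_one]
  rw [h3, Matrix.mulVec_single] at h2
  change (Subring.center R).subtype T.det =
    (Subring.center R).subtype (T.adjugate j i) * q at h2
  rw [Matrix.adjugate_fin_succ_eq_det_submatrix] at h2
  rw [h2]
  set d := (T.submatrix i.succAbove j.succAbove).det with hd
  have hc : q * (Subring.center R).subtype d = (Subring.center R).subtype d * q :=
    Subring.mem_center_iff.1 d.2 q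
  rw [hc, map_mul, map_pow, map_neg, map_one, zsmul_eq_mul, ← mul_assoc, ← mul_assoc]
  push_cast
  rw [← pow_add, ← two_mul, pow_mul]
  simp

theorem odd_mul_odd (n : ℕ) {x y : SuperAlg n} (hx : x ∈ oddPart n) (hy : y ∈ oddPart n) :
    x * y ∈ evenPart n :=
  CliffordAlgebra.evenOdd_mul_le (0 : QuadraticForm ℂ (Fin n → ℂ)) 1 1 (Submodule.mul_mem_mul hx hy)

theorem ii_comm (n : ℕ) (a b : Fin n → ℂ) (g : SuperAlg n) :
    Commute g (ι ℂ a * ι ℂ b) := by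
  have sw : ∀ x y : Fin n → ℂ, ι ℂ x * ι ℂ y = - (ι ℂ y * ι ℂ x) := fun x y =>
    eq_neg_of_add_eq_zero_left (ι_add_mul_swap x y)
  induction g using ExteriorAlgebra.induction with
  | algebraMap r => exact Algebra.commutes r _
  | ι x =>
    change ι ℂ x * (ι ℂ a * ι ℂ b) = (ι ℂ a * ι ℂ b) * ι ℂ x
    rw [← mul_assoc, sw x a, mul_assoc (ι ℂ a), sw b x, neg_mul, mul_neg, mul_assoc]
  | mul x y hx hy => exact hx.mul_left hy
  | add x y hx hy => exact hx.add_left hy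

theorem even_central (n : ℕ) {x : SuperAlg n} (hx : x ∈ evenPart n) :
    x ∈ Subring.center (SuperAlg n) := by
  rw [Subring.mem_center_iff]
  intro g
  change Commute g x
  refine CliffordAlgebra.even_induction (0 : QuadraticForm ℂ (Fin n → ℂ))
    (motive := fun x _ => Commute g x) ?_ ?_ ?_ x hx
  · intro r; exact (Algebra.commutes r g).symm
  · intro x y _ _ hx hy; exact hx.add_right hy
  · intro a b x _ hx
    exact (ii_comm n a b g).mul_right hx

/-- Let `A` be an even `(k+1|l)`-supermatrix over `Λ` with invertible odd-odd
block `Y`, and let `i`, `j` be even indices.  If the matrix `A^{ij}` obtained by deleting row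
`i` and column `j` is invertible over `Λ`, then `A^{ij}` is (with the inherited indexing) an
even `(k|l)`-supermatrix whose odd-odd block is invertible, and the quasideterminant
`|A|_{ij}` satisfies `|A|_{ij}·ber(A^{ij}) = (−1)^{i+j}·ber(A)`. -/
theorem statement4 (n k l : ℕ) (h : (k + l) + 1 = (k + 1) + l)
    (A : Matrix (Fin ((k + 1) + l)) (Fin ((k + 1) + l)) (SuperAlg n))
    (hA : IsEvenSupermatrix n (k + 1) l A) (hY : IsUnit (Yblk n (k + 1) l A))
    (i j : Fin ((k + 1) + l)) (hi : (i : ℕ) < k + 1) (hj : (j : ℕ) < k + 1)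
    (hdel : IsUnit (delRC h A i j)) :
    IsEvenSupermatrix n k l (delRC h A i j) ∧
    IsUnit (Yblk n k l (delRC h A i j)) ∧
    quasidet h A i j * ber n k l (delRC h A i j) =
      ((-1 : ℤ) ^ ((i : ℕ) + (j : ℕ))) • ber n (k + 1) l A := by
  obtain ⟨i', rfl⟩ : ∃ i' : Fin (k+1), i = Fin.castAdd l i' := ⟨⟨i, hi⟩, Fin.ext rfl⟩
  obtain ⟨j', rfl⟩ : ∃ j' : Fin (k+1), j = Fin.castAdd l j' := ⟨⟨j, hj⟩, Fin.ext rfl⟩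
  have hX' : Xblk n k l (delRC h A (Fin.castAdd l i') (Fin.castAdd l j')) =
      (Xblk n (k+1) l A).submatrix i'.succAbove j'.succAbove := by
    ext p q; simp [Xblk, delRC, skipIdx_castAdd]
  have ha' : alphaBlk n k l (delRC h A (Fin.castAdd l i') (Fin.castAdd l j')) =
      (alphaBlk n (k+1) l A).submatrix i'.succAbove id := by
    ext p q; simp [alphaBlk, delRC, skipIdx_castAdd, skipIdx_natAdd]
  have hb' : betaBlk n k l (delRC h A (Fin.castAdd l i') (Fin.castAdd l j')) =
      (betaBlk n (k+1) l A).submatrix id j'.succAbove := by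
    ext p q; simp [betaBlk, delRC, skipIdx_castAdd, skipIdx_natAdd]
  have hY' : Yblk n k l (delRC h A (Fin.castAdd l i') (Fin.castAdd l j')) =
      Yblk n (k+1) l A := by
    ext p q; simp [Yblk, delRC, skipIdx_natAdd]
  obtain ⟨hXe, hYe, hae, hbe⟩ := hA
  refine ⟨⟨?_, ?_, ?_, ?_⟩, ?_, ?_⟩
  · rw [hX']; exact fun p q => hXe _ _
  · rw [hY']; exact hYe
  · rw [ha']; exact fun p q => hae _ _
  · rw [hb']; exact fun p q => hbe _ _
  · rw [hY']; exact hY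
  obtain ⟨w, hw1, hw⟩ := exists_vec h A _ _ hdel
  set q := quasidet h A (Fin.castAdd l i') (Fin.castAdd l j') with hq
  set Z := Ring.inverse (Yblk n (k+1) l A) with hZ
  have hZY : Z * Yblk n (k+1) l A = 1 := Ring.inverse_mul_cancel _ hY
  have hZc : ∀ p q, Z p q ∈ Subring.center (SuperAlg n) :=
    inverse_central _ (fun p q => even_central n (hYe p q)) hY
  set S := Xblk n (k+1) l A - alphaBlk n (k+1) l A * Z * betaBlk n (k+1) l A with hS
  have hSc : ∀ p q, S p q ∈ Subring.center (SuperAlg n) := by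
    intro p q
    rw [hS, Matrix.sub_apply]
    refine sub_mem (even_central n (hXe p q)) ?_
    rw [Matrix.mul_apply]
    refine sum_mem fun r _ => ?_
    rw [Matrix.mul_apply, Finset.sum_mul]
    refine sum_mem fun t _ => ?_
    rw [Subring.mem_center_iff.1 (hZc t r), mul_assoc]
    exact mul_mem (hZc t r) (even_central n (odd_mul_odd n (hae _ _) (hbe _ _)))
  have hber : ber n k l (delRC h A (Fin.castAdd l i') (Fin.castAdd l j')) =
      ncdet (S.submatrix i'.succAbove j'.succAbove) * Ring.inverse (ncdet (Yblk n (k+1) l A)) := by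
    unfold ber
    rw [hX', ha', hb', hY']
    rfl
  have hkey : S.mulVec (fun p => w (Fin.castAdd l p)) = Pi.single i' q := by
    have e1 : (Xblk n (k+1) l A).mulVec (fun p => w (Fin.castAdd l p)) +
        (alphaBlk n (k+1) l A).mulVec (fun p => w (Fin.natAdd (k+1) p)) = Pi.single i' q := by
      ext p
      have := congrFun hw (Fin.castAdd l p)
      rw [Matrix.mulVec, dotProduct, Fin.sum_univ_add] at this
      refine Eq.trans this ?_
      simp [Pi.single_apply]
    have e2 : (betaBlk n (k+1) l A).mulVec (fun p => w (Fin.castAdd l p)) +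
        (Yblk n (k+1) l A).mulVec (fun p => w (Fin.natAdd (k+1) p)) = 0 := by
      ext p
      have := congrFun hw (Fin.natAdd (k+1) p)
      rw [Matrix.mulVec, dotProduct, Fin.sum_univ_add] at this
      refine Eq.trans this ?_
      rw [Pi.single_apply, if_neg]
      · rfl
      · intro hh
        have := congrArg Fin.val hh
        simp at this
        omega
    have e3 := congrArg Z.mulVec e2
    rw [Matrix.mulVec_add, Matrix.mulVec_mulVec, Matrix.mulVec_mulVec, hZY, Matrix.one_mulVec,
      Matrix.mulVec_zero] at e3
    rw [← e1, eq_neg_of_add_eq_zero_right e3, hS, Matrix.sub_mulVec, Matrix.mulVec_neg,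
      Matrix.mulVec_mulVec, Matrix.mul_assoc, sub_eq_add_neg]
  rw [hber, ber, ← hZ, ← hS, ← mul_assoc, det_key S hSc i' j' q _ hw1 hkey, smul_mul_assoc]
  simp

end
end

section
/- (Super Cramer's rule, even positions.) Let A = [[X, α],[β, Y]] be an invertible even (k|l)-supermatrix over Λ (equivalently, X and Y are both invertible), set m := k+l, and let x, y ∈ Λ^m be row vectors with x·A = y, i.e. Σ_p x_p·a_{pj} = y_j for all j. Write y = (y′, y″) with y′ its first k entries and y″ its last l entries. Then for every i ≤ k: x_i·det(X − α·Y⁻¹·β) = Σ_{j=1}^{k} (y′ − y″·Y⁻¹·β)_j·C_{ij}, where C_{ij} denotes the (i,j)-cofactor of the matrix X − α·Y⁻¹·β over the commutative ring Λ₀; that is, x_i·det(X − α·Y⁻¹·β) equals the row-i Laplace expansion of the determinant of the matrix obtained from X − α·Y⁻¹·β by replacing its i-th row with the row y′ − y″·Y⁻¹·β. Equivalently, x_i = ber(A_i(y))·ber(A)⁻¹, where ber(A_i(y)) is obtained from the expression ber(A) = det(X − α·Y⁻¹·β)·det(Y)⁻¹, which is Λ-linear in the entries of row i of A, by substituting y_j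 for a_{ij} (j = 1,…,m). -/
noncomputable section

open ExteriorAlgebra

open CliffordAlgebra in
theorem aux_even_central (n : ℕ) (a : SuperAlg n) (ha : a ∈ evenPart n) :
    a ∈ Subring.center (SuperAlg n) := by
  have key : ∀ (v w : Fin n → ℂ), ExteriorAlgebra.ι ℂ v * ExteriorAlgebra.ι ℂ w =
      - (ExteriorAlgebra.ι ℂ w * ExteriorAlgebra.ι ℂ v) := fun v w =>
    eq_neg_of_add_eq_zero_left (ExteriorAlgebra.ι_add_mul_swap v w)
  have h2 : ∀ v w : Fin n → ℂ, ExteriorAlgebra.ι ℂ v * ExteriorAlgebra.ι ℂ w ∈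
      Subring.center (SuperAlg n) := by
    intro v w
    rw [Subring.mem_center_iff]
    intro g
    induction g using ExteriorAlgebra.induction with
    | algebraMap r => exact Algebra.commutes _ _
    | ι u =>
      rw [← mul_assoc, key u v, neg_mul, mul_assoc, key u w, mul_neg, neg_neg, mul_assoc]
    | mul a b iha ihb => rw [mul_assoc, ihb, ← mul_assoc, iha, mul_assoc]
    | add a b iha ihb => rw [add_mul, mul_add, iha, ihb]
  unfold evenPart at ha
  induction a, ha using CliffordAlgebra.even_induction with
  | algebraMap r =>
    rw [Subring.mem_center_iff]
    intro g
    exact (Algebra.commutes _ _).symm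
  | add a b ha hb ihx ihy => exact add_mem ihx ihy
  | ι_mul_ι_mul m₁ m₂ x hx ih => exact mul_mem (h2 m₁ m₂) ih

theorem aux_odd_anti_ι (n : ℕ) (a : SuperAlg n) (ha : a ∈ oddPart n) (v : Fin n → ℂ) :
    ExteriorAlgebra.ι ℂ v * a = - (a * ExteriorAlgebra.ι ℂ v) := by
  have key : ∀ (v w : Fin n → ℂ), ExteriorAlgebra.ι ℂ v * ExteriorAlgebra.ι ℂ w =
      - (ExteriorAlgebra.ι ℂ w * ExteriorAlgebra.ι ℂ v) := fun v w =>
    eq_neg_of_add_eq_zero_left (ExteriorAlgebra.ι_add_mul_swap v w)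
  unfold oddPart at ha
  induction a, ha using CliffordAlgebra.odd_induction with
  | ι u => exact key v u
  | add a b ha hb ihx ihy => rw [mul_add, add_mul, ihx, ihy, neg_add]
  | @ι_mul_ι_mul m₁ m₂ x hx ih =>
    change ExteriorAlgebra.ι ℂ v * (ExteriorAlgebra.ι ℂ m₁ * ExteriorAlgebra.ι ℂ m₂ * x) =
      - (ExteriorAlgebra.ι ℂ m₁ * ExteriorAlgebra.ι ℂ m₂ * x * ExteriorAlgebra.ι ℂ v)
    have e : x * ExteriorAlgebra.ι ℂ v = - (ExteriorAlgebra.ι ℂ v * x) := by rw [ih, neg_neg]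
    rw [mul_assoc _ x, e, mul_neg, neg_neg, ← mul_assoc, ← mul_assoc, ← mul_assoc, key v m₁,
      neg_mul, mul_assoc _ _ (ExteriorAlgebra.ι ℂ m₂), key v m₂, mul_neg, neg_neg, mul_assoc, mul_assoc,
      mul_assoc, mul_assoc]

theorem aux_odd_anti (n : ℕ) (a b : SuperAlg n) (ha : a ∈ oddPart n) (hb : b ∈ oddPart n) :
    a * b = - (b * a) := by
  have h := aux_odd_anti_ι n b hb
  unfold oddPart at ha
  induction a, ha using CliffordAlgebra.odd_induction with
  | ι u => exact h u
  | add a b ha hb ihx ihy => rw [mul_add, add_mul, ihx, ihy, neg_add]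
  | @ι_mul_ι_mul m₁ m₂ x hx ih =>
    change ExteriorAlgebra.ι ℂ m₁ * ExteriorAlgebra.ι ℂ m₂ * x * b =
      - (b * (ExteriorAlgebra.ι ℂ m₁ * ExteriorAlgebra.ι ℂ m₂ * x))
    have e : ∀ v, b * ExteriorAlgebra.ι ℂ v = - (ExteriorAlgebra.ι ℂ v * b) := by
      intro v; rw [h, neg_neg]
    rw [mul_assoc _ x, ih, ← mul_assoc b, ← mul_assoc b, e, neg_mul, mul_assoc _ b, e]
    simp only [mul_neg, neg_mul, neg_neg, mul_assoc]

theorem aux_odd_mul_central (n : ℕ) (a b : SuperAlg n) (ha : a ∈ oddPart n)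
    (hb : b ∈ oddPart n) : a * b ∈ Subring.center (SuperAlg n) := by
  apply aux_even_central
  have := CliffordAlgebra.evenOdd_mul_le (0 : QuadraticForm ℂ (Fin n → ℂ)) 1 1
    (Submodule.mul_mem_mul ha hb)
  exact this

theorem aux_odd_mul_nilp (n : ℕ) (a b : SuperAlg n) (ha : a ∈ oddPart n)
    (hb : b ∈ oddPart n) : IsNilpotent (a * b) := by
  refine ⟨2, ?_⟩
  have h0 : a * a = 0 := by
    have h := aux_odd_anti n a a ha ha
    have h2 : (2 : ℂ) • (a * a) = 0 := by
      rw [two_smul]; exact add_eq_zero_iff_eq_neg.mpr h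
    exact (smul_eq_zero.mp h2).resolve_left two_ne_zero
  rw [pow_two, mul_assoc, ← mul_assoc b, aux_odd_anti n b a hb ha, neg_mul, mul_neg, mul_assoc a,
    ← mul_assoc, h0, zero_mul, neg_zero]

section generic
variable {R : Type*} [Ring R]

theorem aux_lift {p q : Type*} (M : Matrix p q R) (h : ∀ i j, M i j ∈ Subring.center R) :
    ∃ M' : Matrix p q (Subring.center R), M = M'.map (Subring.center R).subtype :=
  ⟨fun i j => ⟨M i j, h i j⟩, rfl⟩

theorem aux_ncdet_map {k : ℕ} (M : Matrix (Fin k) (Fin k) (Subring.center R)) :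
    ncdet (M.map (Subring.center R).subtype) = (M.det : R) := by
  unfold ncdet
  rw [Matrix.det_apply, ← Subring.subtype_apply, map_sum]
  refine Finset.sum_congr rfl fun σ _ => ?_
  rw [← List.prod_ofFn, Units.smul_def, map_zsmul, map_list_prod, List.map_ofFn]
  rfl

theorem aux_inv_central {k : ℕ} (M W : Matrix (Fin k) (Fin k) R)
    (h : ∀ i j, M i j ∈ Subring.center R) (h1 : M * W = 1) (h2 : W * M = 1) (i j) :
    W i j ∈ Subring.center R := by
  rw [Subring.mem_center_iff]
  intro g
  have hc : Matrix.diagonal (fun _ => g) * M = M * Matrix.diagonal (fun _ => g) := by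
    ext a b
    rw [Matrix.diagonal_mul, Matrix.mul_diagonal]
    exact Subring.mem_center_iff.mp (h a b) g
  have hd : Matrix.diagonal (fun _ => g) * W = W * Matrix.diagonal (fun _ => g) := by
    calc Matrix.diagonal (fun _ => g) * W
        = W * (M * Matrix.diagonal (fun _ => g)) * W := by rw [← mul_assoc W, h2, one_mul]
      _ = W * Matrix.diagonal (fun _ => g) * (M * W) := by rw [← hc]; simp only [mul_assoc]
      _ = _ := by rw [h1, mul_one]
  have := congrFun (congrFun hd i) j
  rwa [Matrix.diagonal_mul, Matrix.mul_diagonal] at this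

theorem aux_det_unit {k : ℕ} (M : Matrix (Fin k) (Fin k) (Subring.center R))
    (h : IsUnit (M.map (Subring.center R).subtype)) : IsUnit M.det := by
  obtain ⟨u, hu⟩ := h
  have h1 : M.map (Subring.center R).subtype * (↑u⁻¹ : Matrix (Fin k) (Fin k) R) = 1 := by
    rw [← hu]; exact u.mul_inv
  have h2 : (↑u⁻¹ : Matrix (Fin k) (Fin k) R) * M.map (Subring.center R).subtype = 1 := by
    rw [← hu]; exact u.inv_mul
  obtain ⟨W, hW⟩ := aux_lift _ (aux_inv_central _ _ (fun i j => (M i j).2) h1 h2)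
  rw [hW, ← Matrix.map_mul] at h1
  have : M * W = 1 := by
    ext i j
    have := congrFun (congrFun h1 i) j
    rw [Matrix.map_apply] at this
    rw [← Subring.subtype_apply, this]
    by_cases hij : i = j <;> simp [Matrix.one_apply, hij]
  exact (Matrix.isUnit_iff_isUnit_det _).mp (IsUnit.of_mul_eq_one _ this)

theorem aux_prod_ofFn {k : ℕ} (g : Fin k → R) (j : Fin k)
    (h : ∀ m, m ≠ j → g m ∈ Subring.center R) :
    (List.ofFn g).prod = g j * (List.ofFn (Function.update g j 1)).prod := by
  induction k with
  | zero => exact j.elim0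
  | succ k ih =>
    rw [List.ofFn_succ, List.ofFn_succ, List.prod_cons, List.prod_cons]
    induction j using Fin.cases with
    | zero =>
      simp [Function.update_of_ne, Fin.succ_ne_zero]
    | succ j =>
      have e : (fun i : Fin k => Function.update g j.succ 1 i.succ) =
          Function.update (fun i => g i.succ) j 1 := by
        ext m
        by_cases hm : m = j
        · subst hm; simp
        · rw [Function.update_of_ne hm, Function.update_of_ne]
          simpa using hm
      rw [e, ih (fun i => g i.succ) j, Function.update_of_ne (Fin.succ_ne_zero j).symm,
        ← mul_assoc, ← mul_assoc]
      · rw [Subring.mem_center_iff.mp (h 0 (Fin.succ_ne_zero j).symm) (g j.succ)]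
      · intro m hm
        exact h _ (by simpa using hm)

theorem aux_prod_zero {k : ℕ} (g : Fin k → R) (j : Fin k) (h : g j = 0) :
    (List.ofFn g).prod = 0 := by
  apply List.prod_eq_zero
  rw [List.mem_ofFn]
  exact ⟨j, h⟩

theorem aux_ncdet_updateRow {k : ℕ} (S : Matrix (Fin k) (Fin k) R)
    (hS : ∀ i j, S i j ∈ Subring.center R) (i : Fin k) (z : Fin k → R) :
    ncdet (S.updateRow i z) = ∑ j, z j * ncdet (S.updateRow i (Pi.single j 1)) := by
  unfold ncdet
  simp only [Finset.mul_sum]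
  rw [Finset.sum_comm]
  refine Finset.sum_congr rfl fun σ _ => ?_
  have hσ : ∀ m, m ≠ σ.symm i → σ m ≠ i := by
    intro m hm h; apply hm; rw [← h]; simp
  rw [Finset.sum_eq_single (σ.symm i)]
  · rw [aux_prod_ofFn _ (σ.symm i), mul_smul_comm]
    · congr 2
      · simp
      · congr 2
        ext m
        by_cases hm : m = σ.symm i
        · subst hm; simp
        · rw [Function.update_of_ne hm, Matrix.updateRow_ne (hσ m hm),
            Matrix.updateRow_ne (hσ m hm)]
    · intro m hm
      rw [Matrix.updateRow_ne (hσ m hm)]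
      exact hS _ _
  · intro j _ hj
    rw [aux_prod_zero _ (σ.symm i), smul_zero, mul_zero]
    simp [Pi.single_apply, hj.symm]
  · simp

theorem aux_updateRow_single {k : ℕ} (S : Matrix (Fin (k+1)) (Fin (k+1)) (Subring.center R))
    (i j : Fin (k+1)) :
    ncdet ((S.map (Subring.center R).subtype).updateRow i (Pi.single j 1)) =
      (S.adjugate j i : R) := by
  rw [Matrix.adjugate_apply, ← aux_ncdet_map]
  congr 1
  ext a b
  by_cases ha : a = i
  · subst ha
    by_cases hb : b = j
    · subst hb; simp
    · simp [hb]
  · simp [Matrix.updateRow_ne ha]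

theorem aux_cof {k : ℕ} (S : Matrix (Fin (k+1)) (Fin (k+1)) (Subring.center R))
    (i j : Fin (k+1)) :
    ((-1 : ℤ) ^ ((i : ℕ) + (j : ℕ))) •
      ncdet ((S.map (Subring.center R).subtype).submatrix i.succAbove j.succAbove) =
      (S.adjugate j i : R) := by
  rw [Matrix.adjugate_fin_succ_eq_det_submatrix, Matrix.submatrix_map, aux_ncdet_map]
  simp [zsmul_eq_mul]

theorem aux_cramer {k : ℕ} (S : Matrix (Fin (k+1)) (Fin (k+1)) (Subring.center R))
    (x z : Fin (k+1) → R) (h : ∀ j, z j = ∑ p, x p * (S p j : R)) (i : Fin (k+1)) :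
    ∑ j, z j * (S.adjugate j i : R) = x i * (S.det : R) := by
  simp only [h, Finset.sum_mul]
  rw [Finset.sum_comm]
  have : ∀ p, ∑ j, x p * (S p j : R) * (S.adjugate j i : R) =
      x p * (((S * S.adjugate) p i : Subring.center R) : R) := by
    intro p
    rw [Matrix.mul_apply, ← Subring.subtype_apply, map_sum, Finset.mul_sum]
    simp [mul_assoc]
  simp only [this, Matrix.mul_adjugate]
  rw [Finset.sum_eq_single i]
  · simp
  · intro b _ hb
    simp [Matrix.one_apply, hb]
  · simp

theorem aux_det_sub_nil {C : Type*} [CommRing C] {k : ℕ} (X N : Matrix (Fin k) (Fin k) C)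
    (hX : IsUnit X.det) (hN : ∀ i j, IsNilpotent (N i j)) : IsUnit (X - N).det := by
  have h : (Ideal.Quotient.mk (nilradical C)) ((X - N).det - X.det) = 0 := by
    rw [map_sub, RingHom.map_det, RingHom.map_det, sub_eq_zero]
    congr 1
    ext i j
    simp only [RingHom.mapMatrix_apply, Matrix.map_apply, Matrix.sub_apply, map_sub]
    rw [sub_eq_self, Ideal.Quotient.eq_zero_iff_mem]
    exact hN i j
  rw [Ideal.Quotient.eq_zero_iff_mem, mem_nilradical] at h
  have := h.isUnit_add_left_of_commute hX (Commute.all _ _)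
  simpa using this

end generic

/-- **super Cramer's rule, even positions.**  Let `A = [[X, α],[β, Y]]` be an
invertible even `(k+1|l)`-supermatrix over `Λ` (equivalently, `X` and `Y` are both invertible)
and let `x·A = y` for row vectors `x`, `y`.  Then for every even index `i`:
`x_i·det(X − α·Y⁻¹·β) = Σ_j (y′ − y″·Y⁻¹·β)_j·C_{ij}`, where `C_{ij}` is the `(i,j)`-cofactor
of `X − α·Y⁻¹·β`; equivalently, `x_i = ber(A_i(y))·ber(A)⁻¹`, where `A_i(y)` is obtained by
replacing the `i`-th row of `A` with `y`. -/
theorem statement6 (n k l : ℕ)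
    (A : Matrix (Fin ((k + 1) + l)) (Fin ((k + 1) + l)) (SuperAlg n))
    (hA : IsEvenSupermatrix n (k + 1) l A)
    (hX : IsUnit (Xblk n (k + 1) l A)) (hY : IsUnit (Yblk n (k + 1) l A))
    (x y : Fin ((k + 1) + l) → SuperAlg n)
    (hxy : ∀ j, ∑ p, x p * A p j = y j)
    (i : Fin (k + 1)) :
    x (Fin.castAdd l i) *
        ncdet (Xblk n (k + 1) l A -
          alphaBlk n (k + 1) l A * Ring.inverse (Yblk n (k + 1) l A) * betaBlk n (k + 1) l A)
      = (∑ j : Fin (k + 1),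
          (y (Fin.castAdd l j) -
            ∑ r : Fin l, ∑ q : Fin l,
              y (Fin.natAdd (k + 1) r) * Ring.inverse (Yblk n (k + 1) l A) r q *
                betaBlk n (k + 1) l A q j) *
          (((-1 : ℤ) ^ ((i : ℕ) + (j : ℕ))) •
            ncdet ((Xblk n (k + 1) l A -
              alphaBlk n (k + 1) l A * Ring.inverse (Yblk n (k + 1) l A) *
                betaBlk n (k + 1) l A).submatrix i.succAbove j.succAbove))) ∧
    x (Fin.castAdd l i)
      = ber n (k + 1) l (A.updateRow (Fin.castAdd l i) y) *
          Ring.inverse (ber n (k + 1) l A) := by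
  obtain ⟨hXe, hYe, hαo, hβo⟩ := hA
  set X := Xblk n (k + 1) l A with hXd
  set Y := Yblk n (k + 1) l A with hYd
  set α := alphaBlk n (k + 1) l A with hαd
  set β := betaBlk n (k + 1) l A with hβd
  set W := Ring.inverse Y with hWd
  have hYW : Y * W = 1 := Ring.mul_inverse_cancel _ hY
  have hWY : W * Y = 1 := Ring.inverse_mul_cancel _ hY
  have hXc : ∀ i j, X i j ∈ Subring.center (SuperAlg n) := fun i j => aux_even_central n _ (hXe i j)
  have hYc : ∀ i j, Y i j ∈ Subring.center (SuperAlg n) := fun i j => aux_even_central n _ (hYe i j)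
  have hWc := aux_inv_central Y W hYc hYW hWY
  have hterm : ∀ i r q j, α i r * W r q * β q j = W r q * (α i r * β q j) := by
    intro i r q j
    rw [Subring.mem_center_iff.mp (hWc r q), mul_assoc]
  have hNe : ∀ i j, (α * W * β) i j = ∑ q, ∑ r, W r q * (α i r * β q j) := by
    intro i j
    rw [Matrix.mul_apply]
    refine Finset.sum_congr rfl fun q _ => ?_
    rw [Matrix.mul_apply, Finset.sum_mul]
    exact Finset.sum_congr rfl fun r _ => hterm i r q j
  have hαβ : ∀ i r q j, α i r * β q j ∈ Subring.center (SuperAlg n) := fun i r q j =>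
    aux_odd_mul_central n _ _ (hαo i r) (hβo q j)
  have hNc : ∀ i j, (α * W * β) i j ∈ Subring.center (SuperAlg n) := by
    intro i j
    rw [hNe]
    exact sum_mem fun q _ => sum_mem fun r _ => mul_mem (hWc r q) (hαβ i r q j)
  obtain ⟨X', hX'⟩ := aux_lift X hXc
  obtain ⟨Y', hY'⟩ := aux_lift Y hYc
  obtain ⟨N', hN'⟩ := aux_lift (α * W * β) hNc
  have hNn : ∀ i j, IsNilpotent (N' i j) := by
    intro i j
    have e : N' i j = ∑ q, ∑ r, (⟨W r q, hWc r q⟩ : Subring.center (SuperAlg n)) *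
        ⟨α i r * β q j, hαβ i r q j⟩ := by
      apply Subtype.ext
      have := congrFun (congrFun hN' i) j
      rw [Matrix.map_apply, Subring.subtype_apply] at this
      rw [← this, hNe]
      simp
    rw [e, ← mem_nilradical]
    refine sum_mem fun q _ => sum_mem fun r _ => Ideal.mul_mem_left _ _ ?_
    rw [mem_nilradical]
    obtain ⟨m, hm⟩ := aux_odd_mul_nilp n _ _ (hαo i r) (hβo q j)
    exact ⟨m, Subtype.ext hm⟩
  have hSdet : IsUnit (X' - N').det :=
    aux_det_sub_nil X' N' (aux_det_unit X' (hX' ▸ hX)) hNn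
  have hYdet : IsUnit Y'.det := aux_det_unit Y' (hY' ▸ hY)
  set S' := X' - N' with hS'd
  have hS : X - α * W * β = S'.map (Subring.center (SuperAlg n)).subtype := by
    rw [hX', hN']
    ext i j
    simp [hS'd]
  set z : Fin (k + 1) → SuperAlg n := fun j => y (Fin.castAdd l j) -
            ∑ r : Fin l, ∑ q : Fin l, y (Fin.natAdd (k + 1) r) * W r q * β q j with hz
  have hzx : ∀ j, z j = ∑ p, x (Fin.castAdd l p) * (S' p j : SuperAlg n) := by
    have hy1 : (fun j => y (Fin.castAdd l j)) =
        Matrix.vecMul (fun p => x (Fin.castAdd l p)) X +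
        Matrix.vecMul (fun p => x (Fin.natAdd (k + 1) p)) β := by
      ext j
      rw [← hxy, Fin.sum_univ_add]
      rfl
    have hy2 : (fun j => y (Fin.natAdd (k + 1) j)) =
        Matrix.vecMul (fun p => x (Fin.castAdd l p)) α +
        Matrix.vecMul (fun p => x (Fin.natAdd (k + 1) p)) Y := by
      ext j
      rw [← hxy, Fin.sum_univ_add]
      rfl
    have hzv : z = (fun j => y (Fin.castAdd l j)) -
        Matrix.vecMul (Matrix.vecMul (fun j => y (Fin.natAdd (k + 1) j)) W) β := by
      ext j
      simp only [hz, Pi.sub_apply, Matrix.vecMul, dotProduct, Finset.sum_mul]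
      rw [Finset.sum_comm]
    have hzS : z = Matrix.vecMul (fun p => x (Fin.castAdd l p)) (X - α * W * β) := by
      rw [hzv, hy1, hy2]
      simp only [Matrix.add_vecMul, Matrix.vecMul_vecMul, Matrix.vecMul_sub, hYW, Matrix.one_mul]
      abel
    intro j
    rw [hzS, hS]
    rfl
  have hcr := aux_cramer S' (fun p => x (Fin.castAdd l p)) z hzx i
  constructor
  · rw [hS, aux_ncdet_map, ← hcr]
    refine Finset.sum_congr rfl fun j _ => ?_
    rw [aux_cof]
  · have hu : Xblk n (k+1) l (A.updateRow (Fin.castAdd l i) y) -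
        alphaBlk n (k+1) l (A.updateRow (Fin.castAdd l i) y) *
        Ring.inverse (Yblk n (k+1) l (A.updateRow (Fin.castAdd l i) y)) *
        betaBlk n (k+1) l (A.updateRow (Fin.castAdd l i) y) =
        (S'.map (Subring.center (SuperAlg n)).subtype).updateRow i z ∧
        Yblk n (k+1) l (A.updateRow (Fin.castAdd l i) y) = Y := by
      have hne : ∀ r : Fin l, Fin.natAdd (k+1) r ≠ Fin.castAdd l i := by
        intro r h
        have := congrArg Fin.val h
        simp at this
        omega
      have e1 : Yblk n (k+1) l (A.updateRow (Fin.castAdd l i) y) = Y := by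
        ext a b
        simp only [Yblk, hYd, Matrix.updateRow_ne (hne a)]
      have e2 : betaBlk n (k+1) l (A.updateRow (Fin.castAdd l i) y) = β := by
        ext a b
        simp only [betaBlk, hβd, Matrix.updateRow_ne (hne a)]
      refine ⟨?_, e1⟩
      rw [e1, e2, ← hWd, ← hS]
      ext a b
      by_cases ha : a = i
      · subst ha
        rw [Matrix.updateRow_self, Matrix.sub_apply, Matrix.mul_apply]
        simp only [Matrix.mul_apply, Xblk, alphaBlk, Matrix.updateRow_self, hz, Finset.sum_mul]
        rw [Finset.sum_comm]
      · have ha' : Fin.castAdd l a ≠ Fin.castAdd l i := by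
          intro h; exact ha (Fin.castAdd_injective _ _ h)
        rw [Matrix.updateRow_ne ha, Matrix.sub_apply, Matrix.sub_apply, Matrix.mul_apply,
          Matrix.mul_apply]
        simp only [Matrix.mul_apply, Xblk, alphaBlk, Matrix.updateRow_ne ha', hXd, hαd]
    unfold ber
    rw [hu.1, hu.2, ← hXd, ← hYd, ← hαd, ← hβd, ← hWd, hS,
      aux_ncdet_updateRow (S'.map (Subring.center (SuperAlg n)).subtype) (fun a b => (S' a b).2)]
    simp only [aux_updateRow_single]
    rw [hcr, hY', aux_ncdet_map, aux_ncdet_map]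
    have u1 : IsUnit (S'.det : SuperAlg n) := hSdet.map (Subring.center (SuperAlg n)).subtype
    have u2 : IsUnit (Y'.det : SuperAlg n) := hYdet.map (Subring.center (SuperAlg n)).subtype
    have u3 : IsUnit ((S'.det : SuperAlg n) * Ring.inverse (Y'.det : SuperAlg n)) :=
      u1.mul u2.ringInverse
    rw [mul_assoc (x _), mul_assoc (x _), Ring.mul_inverse_cancel _ u3, mul_one]

end
end

section
/- Let R be an associative unital (possibly noncommutative) ring, let A = (a_{pq}) be an invertible m×m matrix over R, and let i, j be indices such that the (m−1)×(m−1) matrix A^{ij}, obtained from A by deleting row i and column j, is invertible. Then the (j,i) entry of A⁻¹ is invertible in R, and ((A⁻¹)_{ji})⁻¹ = a_{ij} − Σ_{p≠j, q≠i} a_{ip}·((A^{ij})⁻¹)_{pq}·a_{qj}, where the rows of (A^{ij})⁻¹ are indexed by {1,…,m}∖{j} and its columns by {1,…,m}∖{i}. (The right-hand side is the quasideterminant |A|_{ij}.) -/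
noncomputable section

/-- Let `R` be an associative unital (possibly noncommutative) ring, let `A`
be an invertible `m×m` matrix over `R`, and let `i`, `j` be indices such that the matrix
`A^{ij}` obtained by deleting row `i` and column `j` is invertible.  Then the `(j,i)` entry of
`A⁻¹` is invertible in `R` and `((A⁻¹)_{ji})⁻¹` equals the quasideterminant `|A|_{ij}`. -/
theorem statement8 {R : Type*} [Ring R] {m : ℕ} (A : Matrix (Fin (m + 1)) (Fin (m + 1)) R)
    (hA : IsUnit A) (i j : Fin (m + 1)) (hij : IsUnit (delRC rfl A i j)) :
    IsUnit ((Ring.inverse A) j i) ∧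
    Ring.inverse ((Ring.inverse A) j i) = quasidet rfl A i j := by
  have hAB : A * Ring.inverse A = 1 := Ring.mul_inverse_cancel A hA
  have hBA : Ring.inverse A * A = 1 := Ring.inverse_mul_cancel A hA
  have hDC := Ring.mul_inverse_cancel _ hij
  have hCD := Ring.inverse_mul_cancel _ hij
  unfold quasidet
  generalize Ring.inverse A = B at *
  generalize Ring.inverse (delRC rfl A i j) = C at *
  have hs : ∀ (k : Fin (m + 1)) (p : Fin m), skipIdx rfl k p = k.succAbove p := fun _ _ => rfl
  have hD : ∀ p q, delRC rfl A i j p q = A (i.succAbove p) (j.succAbove q) := fun _ _ => rfl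
  simp only [hs]
  -- entries of A * B = 1
  have h1 : A i j * B j i + ∑ p, A i (j.succAbove p) * B (j.succAbove p) i = 1 := by
    have := congrFun (congrFun hAB i) i
    rwa [Matrix.mul_apply, Fin.sum_univ_succAbove _ j, Matrix.one_apply_eq] at this
  have h2 : ∀ q, A (i.succAbove q) j * B j i
      + ∑ p, delRC rfl A i j q p * B (j.succAbove p) i = 0 := by
    intro q
    have := congrFun (congrFun hAB (i.succAbove q)) i
    rwa [Matrix.mul_apply, Fin.sum_univ_succAbove _ j,
      Matrix.one_apply_ne (Fin.succAbove_ne i q)] at this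
  have h3 : B j i * A i j + ∑ q, B j (i.succAbove q) * A (i.succAbove q) j = 1 := by
    have := congrFun (congrFun hBA j) j
    rwa [Matrix.mul_apply, Fin.sum_univ_succAbove _ i, Matrix.one_apply_eq] at this
  have h4 : ∀ p, B j i * A i (j.succAbove p)
      + ∑ q, B j (i.succAbove q) * delRC rfl A i j q p = 0 := by
    intro p
    have := congrFun (congrFun hBA j) (j.succAbove p)
    rwa [Matrix.mul_apply, Fin.sum_univ_succAbove _ i,
      Matrix.one_apply_ne (Fin.succAbove_ne j p).symm] at this
  have h5 : ∀ p, B (j.succAbove p) i = - ∑ q, C p q * (A (i.succAbove q) j * B j i) := by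
    intro p
    have e : C.mulVec ((delRC rfl A i j).mulVec (fun p => B (j.succAbove p) i))
        = fun p => B (j.succAbove p) i := by
      rw [Matrix.mulVec_mulVec, hCD, Matrix.one_mulVec]
    have e2 : (delRC rfl A i j).mulVec (fun p => B (j.succAbove p) i)
        = fun q => -(A (i.succAbove q) j * B j i) := by
      funext q
      exact eq_neg_of_add_eq_zero_right (h2 q)
    rw [e2] at e
    rw [← congrFun e p]
    simp [Matrix.mulVec, dotProduct]
  have h6 : ∀ q, B j (i.succAbove q) = - ∑ p, (B j i * A i (j.succAbove p)) * C p q := by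
    intro q
    have e : Matrix.vecMul (Matrix.vecMul (fun q => B j (i.succAbove q)) (delRC rfl A i j)) C
        = fun q => B j (i.succAbove q) := by
      rw [Matrix.vecMul_vecMul, hDC, Matrix.vecMul_one]
    have e2 : Matrix.vecMul (fun q => B j (i.succAbove q)) (delRC rfl A i j)
        = fun p => -(B j i * A i (j.succAbove p)) := by
      funext p
      exact eq_neg_of_add_eq_zero_right (h4 p)
    rw [e2] at e
    rw [← congrFun e q]
    simp [Matrix.vecMul, dotProduct]
  have hsb : (A i j - ∑ p, ∑ q, A i (j.succAbove p) * C p q * A (i.succAbove q) j) * B j i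
      = 1 := by
    rw [← h1, sub_mul, sub_eq_add_neg]
    congr 1
    simp only [h5, Finset.sum_mul, Finset.mul_sum, mul_neg, Finset.sum_neg_distrib, mul_assoc]
  have hbs : B j i * (A i j - ∑ p, ∑ q, A i (j.succAbove p) * C p q * A (i.succAbove q) j)
      = 1 := by
    rw [← h3, mul_sub, sub_eq_add_neg, Finset.sum_comm]
    congr 1
    simp only [h6, Finset.sum_mul, Finset.mul_sum, neg_mul, Finset.sum_neg_distrib, mul_assoc]
  let u : Rˣ := ⟨B j i, _, hbs, hsb⟩
  exact ⟨⟨u, rfl⟩, Ring.inverse_unit u⟩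

end
end

section
/- The exterior algebra Λ is injective as a left module over itself: for every left Λ-module M, every submodule N ⊆ M, and every left Λ-linear map φ : N → Λ, there exists a left Λ-linear map ψ : M → Λ extending φ. -/
/-!
Statement 9: the exterior algebra `Λ = ⋀ ℂⁿ` is injective as a left module over itself: every
left `Λ`-linear map from a submodule `N` of a left `Λ`-module `M` to `Λ` extends to `M`.
-/

noncomputable section

/-- `Λ` regarded as a left module over itself by left multiplication.  (This is exactly
Mathlib's canonical `Semiring.toModule`; we register it explicitly since instance search
does not fire automatically for the `CliffordAlgebra`-based definition.) -/
instance (n : ℕ) : Module (SuperAlg n) (SuperAlg n) := Semiring.toModule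

theorem frob_ext {K A M : Type*} [Field K] [Ring A] [Algebra K A] [FiniteDimensional K A]
    (t : A →ₗ[K] K) (ht : ∀ x : A, (∀ a : A, t (a * x) = 0) → x = 0)
    [AddCommGroup M] [Module A M] (N : Submodule A M) (φ : N →ₗ[A] A) :
    ∃ ψ : M →ₗ[A] A, ∀ x : N, ψ x = φ x := by
  letI : Module K M := Module.compHom M (algebraMap K A)
  haveI : IsScalarTower K A M := ⟨fun c a m => by
    rw [Algebra.smul_def, mul_smul]; rfl⟩
  let B : A →ₗ[K] (A →ₗ[K] K) :=
    { toFun := fun x => t ∘ₗ LinearMap.mulRight K x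
      map_add' := fun x y => by ext a; simp [mul_add]
      map_smul' := fun c x => by ext a; simp }
  have hB : ∀ x a, B x a = t (a * x) := fun x a => rfl
  have hinj : Function.Injective B := by
    rw [← LinearMap.ker_eq_bot, LinearMap.ker_eq_bot']
    intro x hx
    exact ht x fun a => by rw [← hB, hx]; rfl
  have hsurj : Function.Surjective B :=
    (LinearMap.injective_iff_surjective_of_finrank_eq_finrank
      (Subspace.dual_finrank_eq (K := K) (V := A)).symm).1 hinj
  obtain ⟨τ, hτ⟩ := LinearMap.exists_extend (K := K) (p := N.restrictScalars K)
    (t ∘ₗ (φ.restrictScalars K : N →ₗ[K] A))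
  have hτ' : ∀ x : N, τ x = t (φ x) := fun x => LinearMap.congr_fun hτ x
  have hex : ∀ m : M, ∃ x : A, ∀ a, t (a * x) = τ (a • m) := fun m => by
    obtain ⟨x, hx⟩ := hsurj
      { toFun := fun a => τ (a • m)
        map_add' := fun a b => by rw [add_smul, map_add]
        map_smul' := fun c a => by rw [smul_assoc, map_smul]; rfl }
    exact ⟨x, fun a => by rw [← hB, hx]; rfl⟩
  have huniq : ∀ x y : A, (∀ a, t (a * x) = t (a * y)) → x = y := fun x y h =>
    sub_eq_zero.1 (ht _ fun a => by rw [mul_sub, map_sub, h, sub_self])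
  choose ψ hψ using hex
  refine ⟨{ toFun := ψ, map_add' := ?_, map_smul' := ?_ }, ?_⟩
  · intro x y
    refine huniq _ _ fun a => ?_
    rw [mul_add, map_add, hψ, hψ, hψ, smul_add, map_add]
  · intro b x
    refine huniq _ _ fun a => ?_
    rw [RingHom.id_apply, smul_eq_mul, ← mul_assoc, hψ, hψ, mul_smul]
  · intro x
    refine huniq _ _ fun a => ?_
    change t (a * ψ x) = _
    rw [hψ, ← smul_eq_mul, ← map_smul, ← hτ']
    rfl

theorem ext_nondeg (n : ℕ) (b : Module.Basis (Fin n) ℂ (Fin n → ℂ))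
    (x : ExteriorAlgebra ℂ (Fin n → ℂ))
    (h : ∀ a, b.ExteriorAlgebra.coord Finset.univ (a * x) = 0) : x = 0 := by
  have key : ∀ S T : Finset (Fin n), T ≠ S →
      b.ExteriorAlgebra.coord Finset.univ (b.ExteriorAlgebra Sᶜ * b.ExteriorAlgebra T) = 0 := by
    intro S T hTS
    by_cases hd : Disjoint Sᶜ T
    · have := ExteriorAlgebra.basis_mul_of_disjoint b
        (Set.powersetCard.ofCard (s := Sᶜ) rfl) (Set.powersetCard.ofCard (s := T) rfl) hd
      erw [this]
      rw [Units.smul_def, map_zsmul, Module.Basis.coord_apply, Module.Basis.repr_self,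
        Finsupp.single_apply, if_neg, smul_zero]
      intro hU
      apply hTS
      have hU' : Sᶜ.disjUnion T hd = Finset.univ := hU
      ext i
      have h1 : i ∈ Sᶜ.disjUnion T hd := hU' ▸ Finset.mem_univ i
      have h2 : i ∈ Sᶜ → i ∉ T := fun hi => Finset.disjoint_left.1 hd hi
      simp only [Finset.mem_disjUnion, Finset.mem_compl] at h1 h2
      tauto
    · have := ExteriorAlgebra.basis_mul_of_not_disjoint b
        (Set.powersetCard.ofCard (s := Sᶜ) rfl) (Set.powersetCard.ofCard (s := T) rfl) hd
      erw [this]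
      simp
  have key2 : ∀ S : Finset (Fin n),
      b.ExteriorAlgebra.coord Finset.univ (b.ExteriorAlgebra Sᶜ * b.ExteriorAlgebra S) ≠ 0 := by
    intro S
    have hd : Disjoint Sᶜ S := disjoint_compl_left
    have := ExteriorAlgebra.basis_mul_of_disjoint b
        (Set.powersetCard.ofCard (s := Sᶜ) rfl) (Set.powersetCard.ofCard (s := S) rfl) hd
    erw [this]
    rw [Units.smul_def, map_zsmul, Module.Basis.coord_apply, Module.Basis.repr_self,
        Finsupp.single_apply, if_pos]
    · simp
    · change Sᶜ.disjUnion S hd = Finset.univ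
      ext i
      simp only [Finset.mem_disjUnion, Finset.mem_compl, Finset.mem_univ, iff_true]
      tauto
  apply b.ExteriorAlgebra.repr.injective
  ext S
  have hS := h (b.ExteriorAlgebra Sᶜ)
  rw [← b.ExteriorAlgebra.sum_repr x, Finset.mul_sum, map_sum, Finset.sum_eq_single S] at hS
  · rw [mul_smul_comm, map_smul, smul_eq_mul] at hS
    simpa using (mul_eq_zero.1 hS).resolve_right (key2 S)
  · intro T _ hT
    rw [mul_smul_comm, map_smul, key S T hT, smul_zero]
  · simp

/-- The exterior algebra `Λ` is injective as a left module over itself: for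
every left `Λ`-module `M`, every submodule `N ⊆ M`, and every left `Λ`-linear map `φ : N → Λ`,
there is a left `Λ`-linear map `ψ : M → Λ` extending `φ`. -/
theorem statement9 (n : ℕ) (M : Type*) [AddCommGroup M] [Module (SuperAlg n) M]
    (N : Submodule (SuperAlg n) M) (φ : N →ₗ[SuperAlg n] SuperAlg n) :
    ∃ ψ : M →ₗ[SuperAlg n] SuperAlg n, ∀ x : N, ψ x = φ x := by
  let b := Pi.basisFun ℂ (Fin n)
  haveI : FiniteDimensional ℂ (SuperAlg n) := b.ExteriorAlgebra.finiteDimensional_of_finite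
  exact frob_ext (b.ExteriorAlgebra.coord Finset.univ) (ext_nondeg n b) N φ

end
end
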